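/- arXiv:1703.09531 — 4 statements merged into one kernel-verified Lean document; each statement's English description precedes it below -/
import Mathlib

section
/- Let w : [a,b] → ℝ be a continuous concave function, −∞ < a < b < ∞, and let a = x₀ < x₁ < ⋯ < x_m = b be any partition of [a,b]. Let w̃_m be the piecewise linear function on [a,b] determined as follows: at each midpoint x_i* = (x_i + x_{i−1})/2 it takes the value w̃_m(x_i*) = (1/(x_i − x_{i−1})) ∫_{x_{i−1}}^{x_i} w(s) ds (the average of w over [x_{i−1}, x_i]); it interpolates linearly between consecutive midpoints x_{i−1}* and x_i*; and on [a, x₁*] and (x_m*, b] it is defined by linearly extending the adjacent linear piece. Then w̃_m is a concave function on [a,b]. -/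
open MeasureTheory Real Set intervalIntegral

lemma integral_affine_aux (c d u v : ℝ) :
    ∫ s in u..v, (c * s + d) = (v - u) * (c * ((u + v) / 2) + d) := by
  rw [intervalIntegral.integral_add (by apply Continuous.intervalIntegrable; fun_prop)
    (by apply Continuous.intervalIntegrable; fun_prop),
    intervalIntegral.integral_const_mul, integral_id, intervalIntegral.integral_const]
  simp only [smul_eq_mul]
  ring

lemma avg_le_aux (w : ℝ → ℝ) (c d u v : ℝ) (huv : u < v) (hc : ContinuousOn w (Icc u v))
    (h : ∀ s ∈ Icc u v, w s ≤ c * s + d) :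
    (1 / (v - u)) * ∫ s in u..v, w s ≤ c * ((u + v) / 2) + d := by
  have h1 : ∫ s in u..v, w s ≤ ∫ s in u..v, (c * s + d) :=
    intervalIntegral.integral_mono_on huv.le (hc.intervalIntegrable_of_Icc huv.le)
      (by apply Continuous.intervalIntegrable; fun_prop) h
  rw [integral_affine_aux] at h1
  have : 0 < v - u := by linarith
  rw [one_div, inv_mul_le_iff₀ this]
  exact h1

lemma le_avg_aux (w : ℝ → ℝ) (c d u v : ℝ) (huv : u < v) (hc : ContinuousOn w (Icc u v))
    (h : ∀ s ∈ Icc u v, c * s + d ≤ w s) :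
    c * ((u + v) / 2) + d ≤ (1 / (v - u)) * ∫ s in u..v, w s := by
  have h1 : ∫ s in u..v, (c * s + d) ≤ ∫ s in u..v, w s :=
    intervalIntegral.integral_mono_on huv.le
      (by apply Continuous.intervalIntegrable; fun_prop) (hc.intervalIntegrable_of_Icc huv.le) h
  rw [integral_affine_aux] at h1
  have : 0 < v - u := by linarith
  rw [one_div, le_inv_mul_iff₀ this]
  exact h1

lemma key_aux (w : ℝ → ℝ) (p q r t : ℝ) (hpq : p < q) (hqr : q < r) (hrt : r < t)
    (hc : ContinuousOn w (Icc p t)) (hw : ConcaveOn ℝ (Icc p t) w) :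
    ∃ c d : ℝ, (1 / (q - p)) * (∫ s in p..q, w s) ≤ c * ((p + q) / 2) + d ∧
      c * ((q + r) / 2) + d ≤ (1 / (r - q)) * (∫ s in q..r, w s) ∧
      (1 / (t - r)) * (∫ s in r..t, w s) ≤ c * ((r + t) / 2) + d := by
  obtain ⟨c, hcc⟩ : ∃ c, c = (w r - w q) / (r - q) := ⟨_, rfl⟩
  have hr : 0 < r - q := by linarith
  have hcr : c * (r - q) = w r - w q := by rw [hcc]; field_simp
  refine ⟨c, w q - c * q, avg_le_aux w _ _ _ _ hpq ?_ ?_, le_avg_aux w _ _ _ _ hqr ?_ ?_,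
    avg_le_aux w _ _ _ _ hrt ?_ ?_⟩
  · exact hc.mono (Icc_subset_Icc le_rfl (by linarith))
  · rintro s ⟨h1, h2⟩
    rcases h2.eq_or_lt with rfl | h2
    · linarith
    have := hw.slope_anti_adjacent (x := s) (y := q) (z := r) ⟨h1, by linarith⟩
      ⟨by linarith, by linarith⟩ h2 hqr
    rw [← hcc, le_div_iff₀ (by linarith)] at this
    linarith
  · exact hc.mono (Icc_subset_Icc (by linarith) (by linarith))
  · rintro s ⟨h1, h2⟩
    rcases h1.eq_or_lt with rfl | h1
    · linarith
    rcases h2.eq_or_lt with rfl | h2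
    · linarith
    have := hw.slope_anti_adjacent (x := q) (y := s) (z := r) ⟨by linarith, by linarith⟩
      ⟨by linarith, by linarith⟩ h1 h2
    rw [div_le_div_iff₀ (by linarith) (by linarith)] at this
    have e : w r = w q + c * (r - q) := by linarith
    rw [e] at this
    have : (c * (s - q)) * (r - q) ≤ (w s - w q) * (r - q) := by nlinarith
    have := le_of_mul_le_mul_right this hr
    linarith
  · exact hc.mono (Icc_subset_Icc (by linarith) (by linarith))
  · rintro s ⟨h1, h2⟩
    rcases h1.eq_or_lt with rfl | h1
    · linarith
    have := hw.slope_anti_adjacent (x := q) (y := r) (z := s) ⟨by linarith, by linarith⟩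
      ⟨by linarith, by linarith⟩ hqr h1
    rw [← hcc, div_le_iff₀ (by linarith)] at this
    linarith

lemma aff_unique_aux (c d c' d' p q : ℝ) (h : p < q) (h1 : c * p + d = c' * p + d')
    (h2 : c * q + d = c' * q + d') : c = c' ∧ d = d' := by
  have : (c - c') * (q - p) = 0 := by linarith
  have hc : c = c' := by
    rcases mul_eq_zero.1 this with h | h <;> linarith
  subst hc
  exact ⟨rfl, by linarith⟩

/-- let `w` be a continuous concave function on `[a,b]` and let
`a = x 0 < x 1 < ⋯ < x m = b` be a partition (`m ≥ 2`). Let `wt` be the piecewise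
linear approximant of `w`: at each midpoint `(x (i-1) + x i)/2` it takes the
average value of `w` over `[x (i-1), x i]`, it is affine between consecutive
midpoints, and it is affine (linearly extended) on `[a, (x 1 + x 2)/2]` and on
`[(x (m-2) + x (m-1))/2, b]`. Then `wt` is concave on `[a,b]`. -/
theorem piecewise_linear_approx_concave
    (a b : ℝ) (hab : a < b) (m : ℕ) (hm : 2 ≤ m)
    (x : ℕ → ℝ) (hx0 : x 0 = a) (hxm : x m = b)
    (hxmono : ∀ i < m, x i < x (i + 1))
    (w : ℝ → ℝ) (hcont : ContinuousOn w (Icc a b))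
    (hconc : ConcaveOn ℝ (Icc a b) w)
    (wt : ℝ → ℝ)
    (hval : ∀ i, 1 ≤ i → i ≤ m →
      wt ((x (i - 1) + x i) / 2) =
        (1 / (x i - x (i - 1))) * ∫ s in (x (i - 1))..(x i), w s)
    (haff : ∀ i, 2 ≤ i → i ≤ m → ∃ c d : ℝ,
      ∀ y ∈ Icc ((x (i - 2) + x (i - 1)) / 2) ((x (i - 1) + x i) / 2),
        wt y = c * y + d)
    (haffL : ∃ c d : ℝ, ∀ y ∈ Icc a ((x 1 + x 2) / 2), wt y = c * y + d)
    (haffR : ∃ c d : ℝ, ∀ y ∈ Icc ((x (m - 2) + x (m - 1)) / 2) b, wt y = c * y + d) :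
    ConcaveOn ℝ (Icc a b) wt := by
  obtain ⟨n, rfl⟩ : ∃ n, m = n + 2 := ⟨m - 2, by omega⟩
  have hmono : ∀ j ≤ n + 2, ∀ i ≤ j, x i ≤ x j := by
    intro j
    induction j with
    | zero => intro _ i hi; rw [Nat.le_zero.1 hi]
    | succ j ih =>
      intro hj i hi
      rcases hi.eq_or_lt with rfl | hi
      · exact le_rfl
      · exact (ih (by omega) i (by omega)).trans (hxmono j (by omega)).le
  obtain ⟨P, hP⟩ : ∃ P : ℕ → ℝ, ∀ k, P k = (x k + x (k + 1)) / 2 := ⟨_, fun _ => rfl⟩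
  have hPlt : ∀ k ≤ n, P k < P (k + 1) := by
    intro k hk
    rw [hP, hP]
    linarith [hxmono k (by omega), hxmono (k + 1) (by omega)]
  have hPmono : ∀ j ≤ n + 1, ∀ i ≤ j, P i ≤ P j := by
    intro j hj i hi
    rw [hP, hP]
    linarith [hmono j (by omega) i hi, hmono (j + 1) (by omega) (i + 1) (by omega)]
  have hA : ∀ k ≤ n + 1, wt (P k) = (1 / (x (k + 1) - x k)) * ∫ s in (x k)..(x (k + 1)), w s := by
    intro k hk
    have := hval (k + 1) (by omega) (by omega)
    simpa [hP] using this
  have hex : ∀ k, ∃ c d : ℝ, k ≤ n → ∀ y ∈ Icc (P k) (P (k + 1)), wt y = c * y + d := by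
    intro k
    by_cases hk : k ≤ n
    · obtain ⟨c, d, h⟩ := haff (k + 2) (by omega) (by omega)
      refine ⟨c, d, fun _ y hy => h y ?_⟩
      rw [hP, hP] at hy
      exact hy
    · exact ⟨0, 0, fun h => absurd h hk⟩
  choose c d hcd using hex
  have hl : ∀ k ≤ n, wt (P k) = c k * P k + d k := fun k hk =>
    hcd k hk _ ⟨le_rfl, (hPlt k hk).le⟩
  have hr : ∀ k ≤ n, wt (P (k + 1)) = c k * P (k + 1) + d k := fun k hk =>
    hcd k hk _ ⟨(hPlt k hk).le, le_rfl⟩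
  have hx0P : a ≤ P 0 := by
    rw [hP]; linarith [hxmono 0 (by omega)]
  have hPb : P (n + 1) ≤ b := by
    rw [hP]; linarith [hxmono (n + 1) (by omega)]
  have hL : ∀ y ∈ Icc a (P 1), wt y = c 0 * y + d 0 := by
    obtain ⟨c', d', h⟩ := haffL
    have h' : ∀ y ∈ Icc a (P 1), wt y = c' * y + d' := by rw [hP]; exact h
    have h01 := hPlt 0 (by omega)
    obtain ⟨e1, e2⟩ := aff_unique_aux c' d' (c 0) (d 0) _ _ h01
      (by rw [← hl 0 (by omega), h' _ ⟨hx0P, h01.le⟩])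
      (by rw [← hr 0 (by omega), h' _ ⟨hx0P.trans h01.le, le_rfl⟩])
    rw [← e1, ← e2]; exact h'
  have hR : ∀ y ∈ Icc (P n) b, wt y = c n * y + d n := by
    obtain ⟨c', d', h⟩ := haffR
    have h' : ∀ y ∈ Icc (P n) b, wt y = c' * y + d' := by rw [hP]; exact h
    have h01 := hPlt n (by omega)
    obtain ⟨e1, e2⟩ := aff_unique_aux c' d' (c n) (d n) _ _ h01
      (by rw [← hl n (by omega), h' _ ⟨le_rfl, h01.le.trans hPb⟩])
      (by rw [← hr n (by omega), h' _ ⟨h01.le, hPb⟩])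
    rw [← e1, ← e2]; exact h'
  have hslope : ∀ k, k + 1 ≤ n → c (k + 1) ≤ c k := by
    intro k hk
    have hsub : Icc (x k) (x (k + 3)) ⊆ Icc a b := by
      rw [← hx0, ← hxm]
      exact Icc_subset_Icc (hmono k (by omega) 0 (by omega)) (hmono _ le_rfl _ (by omega))
    obtain ⟨e, f, h1, h2, h3⟩ := key_aux w (x k) (x (k + 1)) (x (k + 2)) (x (k + 3))
      (hxmono _ (by omega)) (hxmono _ (by omega)) (hxmono _ (by omega)) (hcont.mono hsub)
      (hconc.subset hsub (convex_Icc _ _))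
    have a1 := hA k (by omega)
    have a2 := hA (k + 1) (by omega)
    have a3 := hA (k + 2) (by omega)
    rw [← a1, ← hP] at h1
    rw [← a2, ← hP (k + 1)] at h2
    rw [← a3, ← hP (k + 2)] at h3
    have b1 := hl k (by omega)
    have b2 := hr k (by omega)
    have b3 := hl (k + 1) hk
    have b4 := hr (k + 1) hk
    have p1 := hPlt k (by omega)
    have p2 := hPlt (k + 1) (by omega)
    have q1 : e * (P (k + 1) - P k) ≤ c k * (P (k + 1) - P k) := by linarith
    have q2 : c (k + 1) * (P (k + 2) - P (k + 1)) ≤ e * (P (k + 2) - P (k + 1)) := by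
      have : P (k + 1 + 1) = P (k + 2) := rfl
      rw [this] at b4
      linarith
    exact (le_of_mul_le_mul_right q2 (sub_pos.2 p2)).trans
      (le_of_mul_le_mul_right q1 (sub_pos.2 p1))
  have hstep : ∀ k, k + 1 ≤ n → ∀ z, (c (k + 1) * z + d (k + 1)) - (c k * z + d k)
      = (c k - c (k + 1)) * (P (k + 1) - z) := by
    intro k hk z
    have b2 := hr k (by omega)
    have b3 := hl (k + 1) hk
    linarith
  have hcover : ∀ z ∈ Icc a b, ∃ k ≤ n, wt z = c k * z + d k ∧
      (∀ j ≤ k, 1 ≤ j → P j ≤ z) ∧ (∀ j, k < j → j ≤ n → z ≤ P j) := by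
    rintro z ⟨hza, hzb⟩
    have hind : ∀ N ≤ n, z ≤ P (N + 1) → ∃ k ≤ n, wt z = c k * z + d k ∧
      (∀ j ≤ k, 1 ≤ j → P j ≤ z) ∧ (∀ j, k < j → j ≤ n → z ≤ P j) := by
      intro N
      induction N with
      | zero =>
        intro _ hz
        exact ⟨0, by omega, hL z ⟨hza, hz⟩, fun j _ _ => by omega,
          fun j hj hjn => hz.trans (hPmono j (by omega) 1 (by omega))⟩
      | succ N ih =>
        intro hN hz
        rcases le_total z (P (N + 1)) with h | h
        · exact ih (by omega) h
        · exact ⟨N + 1, hN, hcd _ hN z ⟨h, hz⟩,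
            fun j hj _ => (hPmono _ (by omega) j hj).trans h,
            fun j hj hjn => hz.trans (hPmono j (by omega) _ (by omega))⟩
    rcases le_total z (P (n + 1)) with h | h
    · exact hind n le_rfl h
    · have h' : P n ≤ z := (hPlt n le_rfl).le.trans h
      exact ⟨n, le_rfl, hR z ⟨h', hzb⟩, fun j hj _ => (hPmono _ (by omega) j hj).trans h',
        fun j hj hjn => by omega⟩
  have hle : ∀ z ∈ Icc a b, ∀ i ≤ n, wt z ≤ c i * z + d i := by
    intro z hz i hi
    obtain ⟨k, hk, e, h1, h2⟩ := hcover z hz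
    rw [e]
    rcases le_total k i with hki | hik
    · induction i, hki using Nat.le_induction with
      | base => exact le_rfl
      | succ i hki ih =>
        have := hstep i hi z
        have := mul_nonneg (sub_nonneg.2 (hslope i hi)) (sub_nonneg.2 (h2 (i + 1) (by omega) hi))
        linarith [ih (by omega)]
    · clear e h2
      induction k, hik using Nat.le_induction with
      | base => exact le_rfl
      | succ k hki ih =>
        have := hstep k hk z
        have := mul_nonneg (sub_nonneg.2 (hslope k hk))
          (sub_nonneg.2 (h1 (k + 1) le_rfl (by omega)))
        linarith [ih (by omega) (fun j hj => h1 j (by omega))]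
  refine ⟨convex_Icc a b, ?_⟩
  intro u hu v hv α β hα hβ hαβ
  obtain ⟨k, hk, e, -, -⟩ := hcover _ (convex_Icc a b hu hv hα hβ hαβ)
  rw [e]
  have h1 := mul_le_mul_of_nonneg_left (hle u hu k hk) hα
  have h2 := mul_le_mul_of_nonneg_left (hle v hv k hk) hβ
  simp only [smul_eq_mul]
  have : d k = (α + β) * d k := by rw [hαβ, one_mul]
  linarith
end

section
/- There is a universal constant C > 0 (independent of a, b, m) such that the following holds. Let w : [a,b] → ℝ be a continuous concave function with w′₊(a) − w′₋(b) ≤ M, where −∞ < a < b < ∞ and w′₊, w′₋ denote right and left derivatives. Then there exist an integer m ≥ 1 and a partition a = x₀ < x₁ < ⋯ < x_m = b with min_{i=1,…,m}(x_i − x_{i−1}) ≥ (b−a)(2m)^{−2} such that the piecewise linear approximant w̃_m built from this partition satisfies sup_{x ∈ [a,b]} |w(x) − w̃_m(x)| ≤ C M (b−a)/m². Moreover, for every integer r ≥ 1 such a partition can be chosen with r ≤ m ≤ 14r + 1. -/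
open MeasureTheory Real Set intervalIntegral

/-- `wt` is the piecewise linear approximant of `w` built from the partition
`a = x 0 < ⋯ < x m = b`: at each midpoint `(x (i-1) + x i)/2` it takes the average
value of `w` over `[x (i-1), x i]`, it is affine between consecutive midpoints, and
it is affine (linearly extended) on `[x 0, (x 1 + x 2)/2]` and on
`[(x (m-2) + x (m-1))/2, x m]`. -/
def IsPLApproximant (m : ℕ) (x : ℕ → ℝ) (w wt : ℝ → ℝ) : Prop :=
  (∀ i, 1 ≤ i → i ≤ m →
      wt ((x (i - 1) + x i) / 2) =
        (1 / (x i - x (i - 1))) * ∫ s in (x (i - 1))..(x i), w s) ∧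
  (∀ i, 2 ≤ i → i ≤ m → ∃ c d : ℝ,
      ∀ y ∈ Icc ((x (i - 2) + x (i - 1)) / 2) ((x (i - 1) + x i) / 2),
        wt y = c * y + d) ∧
  (∃ c d : ℝ, ∀ y ∈ Icc (x 0) ((x 1 + x 2) / 2), wt y = c * y + d) ∧
  (∃ c d : ℝ, ∀ y ∈ Icc ((x (m - 2) + x (m - 1)) / 2) (x m), wt y = c * y + d)

/-- Existence of a supergradient at every point, with prescribed values at the end points. -/
lemma pl_supergrad (a b : ℝ) (w : ℝ → ℝ) (dA dB : ℝ) (hab : a < b)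
    (hc : ConcaveOn ℝ (Icc a b) w)
    (hA : HasDerivWithinAt w dA (Icc a b) a) (hB : HasDerivWithinAt w dB (Icc a b) b) :
    ∃ g : ℝ → ℝ, g a = dA ∧ g b = dB ∧
      ∀ p ∈ Icc a b, ∀ y ∈ Icc a b, w y ≤ w p + g p * (y - p) := by
  have key : ∀ p ∈ Icc a b, ∃ d : ℝ, (p = a → d = dA) ∧ (p = b → d = dB) ∧
      ∀ y ∈ Icc a b, w y ≤ w p + d * (y - p) := by
    intro p hp
    rcases eq_or_lt_of_le hp.1 with h | h
    · subst h
      refine ⟨dA, fun _ => rfl, fun h => absurd h hab.ne, ?_⟩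
      intro y hy
      rcases eq_or_lt_of_le hy.1 with h | h
      · subst h; simp
      · have := hc.slope_le_of_hasDerivWithinAt hp hy h hA
        rw [slope_def_field, div_le_iff₀ (by linarith)] at this
        linarith
    rcases eq_or_lt_of_le hp.2 with h' | h'
    · subst h'
      refine ⟨dB, fun h => absurd h hab.ne', fun _ => rfl, ?_⟩
      intro y hy
      rcases eq_or_lt_of_le hy.2 with h | h
      · subst h; simp
      · have := hc.le_slope_of_hasDerivWithinAt hy hp h hB
        rw [slope_def_field, le_div_iff₀ (by linarith)] at this
        linarith
    have hi : p ∈ interior (Icc a b) := by rw [interior_Icc]; exact ⟨h, h'⟩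
    have hn := hc.neg
    refine ⟨- derivWithin (-w) (Ioi p) p, fun h1 => absurd h1 h.ne', fun h1 => absurd h1 h'.ne, ?_⟩
    intro y hy
    rcases lt_trichotomy y p with h1 | h1 | h1
    · have h2 := hn.slope_le_leftDeriv_of_mem_interior hy hi h1
      have h3 := h2.trans (hn.leftDeriv_le_rightDeriv_of_mem_interior hi)
      rw [slope_def_field, div_le_iff₀ (by linarith)] at h3
      simp only [Pi.neg_apply] at h3
      linarith
    · subst h1; simp
    · have h3 := hn.rightDeriv_le_slope_of_mem_interior hi hy h1
      rw [slope_def_field, le_div_iff₀ (by linarith)] at h3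
      simp only [Pi.neg_apply] at h3
      linarith
  choose! g h1 h2 h3 using key
  exact ⟨g, h1 a ⟨le_rfl, hab.le⟩ rfl, h2 b ⟨hab.le, le_rfl⟩ rfl, h3⟩

/-- Selection of grid indices. -/
lemma pl_select (n : ℕ) (hn : 1 ≤ n) (F : ℕ → ℕ) (hF : Monotone F) (hFn : ∀ j, F j ≤ n) :
    ∃ (m : ℕ) (j : ℕ → ℕ), n ≤ m ∧ m ≤ 3 * n ∧ j 0 = 0 ∧ j m = n * n ∧ StrictMono j ∧
      ∀ i < m, j (i + 1) = j i + 1 ∨ (j (i + 1) ≤ j i + n ∧ F (j i) = F (j (i + 1))) := by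
  classical
  set G : ℕ → ℕ := fun j => j / n + F j + F (j + 1) with hG
  have hdm : ∀ k, k / n ≤ (k + 1) / n := fun k => Nat.div_le_div_right (Nat.le_succ k)
  have hFm : ∀ k, F k ≤ F (k + 1) := fun k => hF (Nat.le_succ k)
  have hGm : ∀ k, G k ≤ G (k + 1) := by
    intro k
    have := hdm k
    have := hFm k
    have := hFm (k + 1)
    simp only [hG]; omega
  set N := n * n with hN
  have hNpos : 1 ≤ N := Nat.mul_pos hn hn
  have hNdiv : N / n = n := Nat.mul_div_cancel _ hn
  let P : ℕ → Prop := fun k => k = 0 ∨ N < k ∨ G (k - 1) < G k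
  have hPs : ∀ k, G k < G (k + 1) → P (k + 1) := fun k h => Or.inr (Or.inr h)
  have hP0 : P 0 := Or.inl rfl
  have hdivlt : (N - 1) / n < n := by
    rw [Nat.div_lt_iff_lt_mul hn]; omega
  have hjumpN : G (N - 1) < G N := by
    have h1 := hFm (N - 1)
    have h2 := hFm N
    have e : N - 1 + 1 = N := by omega
    simp only [hG, e, hNdiv] at *
    omega
  have hPN : P N := Or.inr (Or.inr hjumpN)
  have hinf : (Set.ofPred P).Infinite := by
    apply Set.infinite_of_not_bddAbove
    rintro ⟨B, hB⟩
    have : (B + N + 1) ∈ Set.ofPred P := Or.inr (Or.inl (by omega))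
    have := hB this
    omega
  have hup : ∀ k < N, Nat.count P (k + 1) ≤ 1 + G k := by
    intro k
    induction k with
    | zero =>
      intro _
      have := Nat.count_le (p := P) (n := 1)
      show Nat.count P 1 ≤ _
      omega
    | succ k ih =>
      intro hk
      have h1 := ih (by omega)
      have h2 := hGm k
      rw [Nat.count_succ]
      split_ifs with h
      · rcases h with h | h | h
        · omega
        · omega
        · simp only [Nat.add_sub_cancel] at h
          omega
      · omega
  have hlow : ∀ k, k / n + 1 ≤ Nat.count P (k + 1) := by
    intro k
    induction k with
    | zero =>
      rw [Nat.count_succ]; simp [hP0]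
    | succ k ih =>
      rw [Nat.count_succ]
      have h1 : (k + 1) / n ≤ k / n + 1 := by
        rw [Nat.succ_div]; split_ifs <;> omega
      split_ifs with h
      · omega
      · have h2 : ¬ G k < G (k + 1) := fun h' => h (hPs k h')
        have := hdm k
        have := hFm k
        have := hFm (k + 1)
        simp only [hG] at h2
        omega
  have hmono := Nat.nth_strictMono hinf
  have hmem := Nat.nth_mem_of_infinite hinf
  have hgap : ∀ i k, Nat.nth P i < k → k < Nat.nth P (i + 1) → ¬ P k := by
    intro i k h1 h2 h3
    have h4 := Nat.nth_count h3
    rw [← h4] at h1 h2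
    have := hmono.lt_iff_lt.1 h1
    have := hmono.lt_iff_lt.1 h2
    omega
  refine ⟨Nat.count P N, Nat.nth P, ?_, ?_, ?_, Nat.nth_count hPN, hmono, ?_⟩
  · have := hlow N
    rw [Nat.count_succ, if_pos hPN, hNdiv] at this
    omega
  · have h1 := hup (N - 1) (by omega)
    have e : N - 1 + 1 = N := by omega
    rw [e] at h1
    have h2 : G N ≤ 3 * n := by
      have := hFn N
      have := hFn (N + 1)
      simp only [hG, hNdiv]; omega
    omega
  · have := Nat.nth_count hP0
    simpa using this
  · intro i hi
    set p := Nat.nth P i with hp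
    set q := Nat.nth P (i + 1) with hq
    have hpq : p < q := hmono (Nat.lt_succ_self i)
    by_cases hq1 : q = p + 1
    · exact Or.inl hq1
    right
    -- G is constant on [p, q-1]
    have hconst : ∀ t, p + t < q → G (p + t) = G p := by
      intro t
      induction t with
      | zero => intro _; rfl
      | succ t ih =>
        intro ht
        have h1 := ih (by omega)
        have h2 : ¬ P (p + t + 1) := hgap i _ (by omega) (by omega)
        have h3 : ¬ G (p + t) < G (p + t + 1) := fun h' => h2 (hPs _ h')
        have h4 := hGm (p + t)
        have : p + (t + 1) = p + t + 1 := by omega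
        rw [this]
        omega
    have h1 := hconst (q - 1 - p) (by omega)
    have e : p + (q - 1 - p) = q - 1 := by omega
    have e2 : q - 1 + 1 = q := by omega
    rw [e] at h1
    have h2 : p / n ≤ (q - 1) / n := Nat.div_le_div_right (by omega)
    have h3 : F p ≤ F (q - 1) := hF (by omega)
    have h4 : F (p + 1) ≤ F q := hF (by omega)
    simp only [hG, e2] at h1
    have h5 : F (p + 1) ≤ F (q - 1) := hF (by omega)
    have h6 := hFm p
    constructor
    · have h7 : p / n = (q - 1) / n := by omega
      have h8 := Nat.div_add_mod p n
      have h9 := Nat.div_add_mod (q - 1) n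
      have h10 := Nat.mod_lt (q - 1) hn
      rw [← h7] at h9
      omega
    · omega

/-- Gluing of finitely many lines. -/
lemma pl_glue (t : ℕ → ℝ) (L : ℕ → ℝ → ℝ) (n : ℕ) (ht : ∀ k ≤ n, t k ≤ t (k + 1))
    (hL : ∀ k < n, L k (t (k + 1)) = L (k + 1) (t (k + 1))) :
    ∃ f : ℝ → ℝ, (∀ k ≤ n, ∀ y ∈ Icc (t k) (t (k + 1)), f y = L k y) ∧
      (∀ y ≤ t 1, f y = L 0 y) ∧ (∀ y, t n ≤ y → f y = L n y) := by
  induction n with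
  | zero =>
    refine ⟨L 0, ?_, fun _ _ => rfl, fun _ _ => rfl⟩
    intro k hk y _
    rw [Nat.le_zero.1 hk]
  | succ n ih =>
    obtain ⟨f, h1, h2, h3⟩ := ih (fun k hk => ht k (by omega)) (fun k hk => hL k (by omega))
    have hm : ∀ k, k ≤ n + 1 → t k ≤ t (n + 1) := by
      have aux : ∀ e k, k + e = n + 1 → t k ≤ t (n + 1) := by
        intro e
        induction e with
        | zero => intro k hk; rw [← hk]; exact le_rfl
        | succ e ihe => intro k hk; exact (ht k (by omega)).trans (ihe (k + 1) (by omega))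
      intro k hk
      exact aux (n + 1 - k) k (by omega)
    have hlast : ∀ y, t (n + 1) ≤ y → (if y ≤ t (n + 1) then f y else L (n + 1) y) = L (n + 1) y := by
      intro y hy
      split_ifs with h
      · have e : y = t (n + 1) := le_antisymm h hy
        rw [e, h3 _ (ht n (by omega)), hL n (by omega)]
      · rfl
    refine ⟨fun y => if y ≤ t (n + 1) then f y else L (n + 1) y, ?_, ?_, ?_⟩
    · intro k hk y hy
      rcases Nat.lt_or_ge n k with h | h
      · have e : k = n + 1 := by omega
        subst e
        exact hlast y hy.1
      · show (if y ≤ t (n + 1) then f y else L (n + 1) y) = L k y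
        rw [if_pos (hy.2.trans (hm (k + 1) (by omega)))]
        exact h1 k h y hy
    · intro y hy
      show (if y ≤ t (n + 1) then f y else L (n + 1) y) = L 0 y
      rw [if_pos (hy.trans (hm 1 (by omega)))]
      exact h2 y hy
    · exact hlast

/-- Average of `w` compared with an affine majorant. -/
lemma pl_avg (w : ℝ → ℝ) (p q c d E : ℝ) (hpq : p < q) (hw : ContinuousOn w (Icc p q))
    (h : ∀ y ∈ Icc p q, w y ≤ c + d * y ∧ c + d * y ≤ w y + E) :
    (1 / (q - p)) * (∫ s in p..q, w s) ≤ c + d * ((p + q) / 2) ∧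
      c + d * ((p + q) / 2) ≤ (1 / (q - p)) * (∫ s in p..q, w s) + E := by
  have hi : IntervalIntegrable w volume p q := by
    apply ContinuousOn.intervalIntegrable
    rwa [uIcc_of_le hpq.le]
  have hT : ∫ s in p..q, (c + d * s) = (q - p) * (c + d * ((p + q) / 2)) := by
    rw [intervalIntegral.integral_add (by simp) (by
      apply Continuous.intervalIntegrable; fun_prop)]
    rw [intervalIntegral.integral_const_mul, integral_id, intervalIntegral.integral_const]
    simp only [smul_eq_mul]
    ring
  have hTi : IntervalIntegrable (fun s => c + d * s) volume p q := by
    apply Continuous.intervalIntegrable; fun_prop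
  have h1 := intervalIntegral.integral_mono_on hpq.le hi hTi (fun y hy => (h y hy).1)
  have h2 := intervalIntegral.integral_mono_on hpq.le hTi (hi.add (by simp : IntervalIntegrable (fun _ => E) volume p q)) (fun y hy => (h y hy).2)
  have h3 : ∫ s in p..q, (w s + E) = (∫ s in p..q, w s) + (q - p) * E := by
    rw [intervalIntegral.integral_add hi (by simp), intervalIntegral.integral_const]; simp
  change _ ≤ ∫ s in p..q, (w s + E) at h2
  rw [h3, hT] at h2
  rw [hT] at h1
  have hpos : 0 < q - p := by linarith
  set I := ∫ s in p..q, w s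
  have e : (1 / (q - p)) * I = I / (q - p) := by ring
  rw [e]
  constructor
  · rw [div_le_iff₀ hpos]; linarith
  · have : (c + d * ((p + q) / 2)) - E ≤ I / (q - p) := by
      rw [le_div_iff₀ hpos]; linarith
    linarith

/-- Extrapolated affine interpolation error. -/
lemma pl_err (p c q A0 A1 T0 d E y : ℝ) (hp : p < c) (hq : c < q)
    (hy : y ∈ Icc p q)
    (h0 : A0 ≤ T0 + d * ((p + c) / 2)) (h0' : T0 + d * ((p + c) / 2) ≤ A0 + E)
    (h1 : A1 ≤ T0 + d * ((c + q) / 2)) (h1' : T0 + d * ((c + q) / 2) ≤ A1 + E) :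
    -E ≤ T0 + d * y - (A0 + (A1 - A0) / ((c + q) / 2 - (p + c) / 2) * (y - (p + c) / 2)) ∧
    T0 + d * y - (A0 + (A1 - A0) / ((c + q) / 2 - (p + c) / 2) * (y - (p + c) / 2)) ≤ 2 * E := by
  have hD : 0 < (c + q) / 2 - (p + c) / 2 := by linarith
  set D := (c + q) / 2 - (p + c) / 2 with hDd
  set ρ := (y - (p + c) / 2) / D with hρ
  have hρ1 : -1 ≤ ρ := by rw [hρ, le_div_iff₀ hD, hDd]; linarith [hy.1]
  have hρ2 : ρ ≤ 2 := by rw [hρ, div_le_iff₀ hD, hDd]; linarith [hy.2]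
  have hyρ : y = (p + c) / 2 + ρ * D := by rw [hρ]; field_simp; ring
  set e0 := T0 + d * ((p + c) / 2) - A0 with he0
  set e1 := T0 + d * ((c + q) / 2) - A1 with he1
  have key : T0 + d * y - (A0 + (A1 - A0) / D * (y - (p + c) / 2)) = e0 * (1 - ρ) + e1 * ρ := by
    have : (A1 - A0) / D * (y - (p + c) / 2) = (A1 - A0) * ρ := by rw [hρ]; ring
    rw [this]
    conv_lhs => rw [hyρ]
    rw [he0, he1, hDd]; ring
  rw [key]
  have a0 : 0 ≤ e0 := by linarith
  have a1 : 0 ≤ e1 := by linarith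
  have b0 : e0 ≤ E := by linarith
  have b1 : e1 ≤ E := by linarith
  have c1 : -1 ≤ ρ := hρ1
  rcases le_total ρ 0 with h | h
  · constructor <;> nlinarith
  · rcases le_total ρ 1 with h' | h'
    · constructor <;> nlinarith
    · constructor <;> nlinarith

/-- The approximant for a partition on which all the supergradient errors are at most `E`. -/
lemma pl_main (a b : ℝ) (w g : ℝ → ℝ) (E : ℝ) (hw : ContinuousOn w (Icc a b))
    (hg : ∀ p ∈ Icc a b, ∀ y ∈ Icc a b, w y ≤ w p + g p * (y - p))
    (hanti : ∀ p ∈ Icc a b, ∀ q ∈ Icc a b, p ≤ q → g q ≤ g p)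
    (n : ℕ) (x : ℕ → ℝ) (h0 : x 0 = a) (hn : x (n + 2) = b) (hx : StrictMono x)
    (hE : ∀ i < n + 2, (x (i + 1) - x i) * (g (x i) - g (x (i + 1))) ≤ E) :
    ∃ wt : ℝ → ℝ, IsPLApproximant (n + 2) x w wt ∧ ∀ y ∈ Icc a b, |w y - wt y| ≤ 3 * E := by
  set t : ℕ → ℝ := fun k => (x k + x (k + 1)) / 2 with ht
  set A : ℕ → ℝ := fun k => (1 / (x (k + 1) - x k)) * ∫ s in (x k)..(x (k + 1)), w s with hA
  set L : ℕ → ℝ → ℝ := fun k y => A k + (A (k + 1) - A k) / (t (k + 1) - t k) * (y - t k) with hL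
  have hxlt : ∀ k, x k < x (k + 1) := fun k => hx (Nat.lt_succ_self k)
  have htlt : ∀ k, t k < t (k + 1) := by
    intro k
    have := hxlt k
    have := hxlt (k + 1)
    simp only [ht]; linarith
  have hL1 : ∀ k, L k (t (k + 1)) = A (k + 1) := by
    intro k
    have : t (k + 1) - t k ≠ 0 := by have := htlt k; intro h; linarith
    simp only [hL]; field_simp; ring
  have hL0 : ∀ k, L k (t k) = A k := by intro k; simp [hL]
  have hmem : ∀ k ≤ n + 2, x k ∈ Icc a b := by
    intro k hk
    exact ⟨h0 ▸ hx.monotone (Nat.zero_le k), hn ▸ hx.monotone hk⟩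
  obtain ⟨f, hf1, hf2, hf3⟩ := pl_glue t L n (fun k _ => (htlt k).le)
    (fun k _ => by rw [hL1, hL0])
  -- the error estimate for a single line
  have hest : ∀ k ≤ n, ∀ y ∈ Icc (x k) (x (k + 2)), |w y - L k y| ≤ 3 * E := by
    intro k hk y hy
    have m0 := hmem k (by omega)
    have m1 := hmem (k + 1) (by omega)
    have m2 := hmem (k + 2) (by omega)
    have l0 := hxlt k
    have l1 : x (k + 1) < x (k + 2) := hxlt (k + 1)
    have E0 := hE k (by omega)
    have E1 : (x (k + 2) - x (k + 1)) * (g (x (k + 1)) - g (x (k + 2))) ≤ E :=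
      hE (k + 1) (by omega)
    set p := x k
    set c := x (k + 1)
    set q := x (k + 2)
    have hT : ∀ z ∈ Icc p q, w z ≤ (w c - g c * c) + g c * z ∧
        (w c - g c * c) + g c * z ≤ w z + E := by
      intro z hz
      have mz : z ∈ Icc a b := ⟨m0.1.trans hz.1, hz.2.trans m2.2⟩
      have i1 := hg c m1 z mz
      have i2 := hg z mz c m1
      refine ⟨by linarith, ?_⟩
      rcases le_total z c with h | h
      · have i3 := hanti p m0 z mz hz.1
        have i4 := hanti z mz c m1 h
        have : (c - z) * (g z - g c) ≤ (c - p) * (g p - g c) := by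
          apply mul_le_mul <;> linarith [hz.1]
        linarith
      · have i3 := hanti z mz q m2 hz.2
        have i4 := hanti c m1 z mz h
        have : (z - c) * (g c - g z) ≤ (q - c) * (g c - g q) := by
          apply mul_le_mul <;> linarith [hz.2]
        linarith
    have av0 := pl_avg w p c (w c - g c * c) (g c) E l0
      (hw.mono (Icc_subset_Icc m0.1 m1.2)) (fun z hz => hT z ⟨hz.1, hz.2.trans l1.le⟩)
    have av1 := pl_avg w c q (w c - g c * c) (g c) E l1
      (hw.mono (Icc_subset_Icc m1.1 m2.2)) (fun z hz => hT z ⟨l0.le.trans hz.1, hz.2⟩)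
    have er := pl_err p c q (A k) (A (k + 1)) (w c - g c * c) (g c) E y l0 l1 hy
      av0.1 av0.2 av1.1 av1.2
    change -E ≤ _ - L k y ∧ _ - L k y ≤ _ at er
    have := hT y hy
    rw [abs_le]
    constructor <;> linarith [er.1, er.2]
  have hEst0 : ∀ y ∈ Icc a b, |w y - f y| ≤ 3 * E := by
    intro y hy
    rcases le_total y (t 0) with h | h
    · rw [hf2 y (h.trans (htlt 0).le)]
      refine hest 0 (by omega) y ⟨h0 ▸ hy.1, ?_⟩
      have := hxlt 0
      have : x 1 < x 2 := hxlt 1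
      simp only [ht] at h
      norm_num at *
      linarith
    rcases le_total (t n) y with h' | h'
    · rw [hf3 y h']
      refine hest n le_rfl y ⟨?_, hn ▸ hy.2⟩
      have := hxlt n
      simp only [ht] at h'
      linarith
    have hex : ∃ k, y ≤ t k := ⟨n, h'⟩
    classical
    set k := Nat.find hex with hk
    have hk1 : y ≤ t k := Nat.find_spec hex
    have hkn : k ≤ n := Nat.find_min' hex h'
    rcases Nat.eq_zero_or_pos k with hk0 | hk0
    · rw [hk0] at hk1
      have e : y = t 0 := le_antisymm hk1 h
      have : t 0 ∈ Icc (x 0) (x 2) := by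
        have := hxlt 0
        have : x 1 < x 2 := hxlt 1
        simp only [ht, mem_Icc]
        norm_num at *
        constructor <;> linarith
      rw [hf2 y (hk1.trans (htlt 0).le)]
      exact hest 0 (by omega) y (e ▸ this)
    · obtain ⟨l, hl⟩ : ∃ l, k = l + 1 := ⟨k - 1, by omega⟩
      have hk2 : ¬ y ≤ t l := Nat.find_min hex (by omega)
      push Not at hk2
      rw [hl] at hk1
      rw [hf1 l (by omega) y ⟨hk2.le, hk1⟩]
      refine hest l (by omega) y ?_
      have := hxlt l
      have : x (l + 1) < x (l + 2) := hxlt (l + 1)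
      simp only [ht] at hk1 hk2
      constructor
      · linarith
      · have e : x (l + 1 + 1) = x (l + 2) := rfl
        rw [e] at hk1
        linarith
  have haff : ∀ k, ∃ c d : ℝ, ∀ y, L k y = c * y + d := by
    intro k
    refine ⟨(A (k + 1) - A k) / (t (k + 1) - t k),
      A k - (A (k + 1) - A k) / (t (k + 1) - t k) * t k, fun y => ?_⟩
    simp only [hL]; ring
  refine ⟨f, ⟨?_, ?_, ?_, ?_⟩, hEst0⟩
  · intro i hi1 hi2
    obtain ⟨k, rfl⟩ : ∃ k, i = k + 1 := ⟨i - 1, by omega⟩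
    rw [Nat.add_sub_cancel]
    change f (t k) = A k
    rcases Nat.lt_or_ge n k with h | h
    · have e : k = n + 1 := by omega
      subst e
      rw [hf3 _ (htlt n).le, hL1]
    · rw [hf1 k h _ ⟨le_rfl, (htlt k).le⟩, hL0]
  · intro i hi1 hi2
    obtain ⟨k, rfl⟩ : ∃ k, i = k + 2 := ⟨i - 2, by omega⟩
    obtain ⟨c, d, h⟩ := haff k
    refine ⟨c, d, fun y hy => ?_⟩
    rw [← h, hf1 k (by omega) y hy]
  · obtain ⟨c, d, h⟩ := haff 0
    refine ⟨c, d, fun y hy => ?_⟩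
    rw [← h, hf2 y hy.2]
  · obtain ⟨c, d, h⟩ := haff n
    refine ⟨c, d, fun y hy => ?_⟩
    rw [← h, hf3 y hy.1]

/-- there is a universal constant `C > 0` such that for every continuous
concave `w : [a,b] → ℝ` with `w′₊(a) − w′₋(b) ≤ M` (one-sided derivatives taken within
`[a,b]`) and every integer `r ≥ 1`, there is a partition `a = x 0 < ⋯ < x m = b` with
`r ≤ m ≤ 14r + 1` and `min (x (i+1) − x i) ≥ (b−a)(2m)⁻²` whose piecewise linear
approximant `wt` satisfies `sup_{[a,b]} |w − wt| ≤ C M (b−a)/m²`. -/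
theorem piecewise_linear_approx_exists :
    ∃ C : ℝ, 0 < C ∧
      ∀ (a b M : ℝ) (w : ℝ → ℝ) (dA dB : ℝ), a < b →
        ContinuousOn w (Icc a b) → ConcaveOn ℝ (Icc a b) w →
        HasDerivWithinAt w dA (Icc a b) a → HasDerivWithinAt w dB (Icc a b) b →
        dA - dB ≤ M →
        ∀ r : ℕ, 1 ≤ r →
          ∃ m : ℕ, r ≤ m ∧ m ≤ 14 * r + 1 ∧
            ∃ x : ℕ → ℝ, x 0 = a ∧ x m = b ∧ (∀ i < m, x i < x (i + 1)) ∧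
              (∀ i < m, (b - a) / (2 * (m : ℝ)) ^ 2 ≤ x (i + 1) - x i) ∧
              ∃ wt : ℝ → ℝ, IsPLApproximant m x w wt ∧
                ∀ y ∈ Icc a b, |w y - wt y| ≤ C * M * (b - a) / (m : ℝ) ^ 2 := by
  refine ⟨27, by norm_num, ?_⟩
  intro a b M w dA dB hab hw hc hA hB hM r hr
  obtain ⟨g, hga, hgb, hg⟩ := pl_supergrad a b w dA dB hab hc hA hB
  have hanti : ∀ p ∈ Icc a b, ∀ q ∈ Icc a b, p ≤ q → g q ≤ g p := by
    intro p hp q hq hpq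
    rcases eq_or_lt_of_le hpq with h | h
    · rw [h]
    · have h1 := hg p hp q hq
      have h2 := hg q hq p hp
      have : 0 ≤ (g p - g q) * (q - p) := by linarith
      have := nonneg_of_mul_nonneg_left this (by linarith)
      linarith
  have ha : a ∈ Icc a b := ⟨le_rfl, hab.le⟩
  have hb : b ∈ Icc a b := ⟨hab.le, le_rfl⟩
  have hM0 : 0 ≤ M := by
    have := hanti a ha b hb hab.le
    linarith
  have hgM : ∀ p ∈ Icc a b, ∀ q ∈ Icc a b, g p - g q ≤ M := by
    intro p hp q hq
    have h1 := hanti a ha p hp hp.1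
    have h2 := hanti q hq b hb hq.2
    linarith
  set n := 2 * r with hn
  have hn1 : 1 ≤ n := by omega
  have hnR : (0 : ℝ) < n := by exact_mod_cast hn1
  set δ : ℝ := (b - a) / (n : ℝ) ^ 2 with hδ
  have hδ0 : 0 < δ := by
    have : 0 < b - a := by linarith
    positivity
  have hδn : δ * (n * n : ℕ) = b - a := by
    rw [hδ]; push_cast; field_simp
  let X : ℕ → ℝ := fun j => a + δ * j
  have hXm : StrictMono X := by
    intro i j hij
    have : (i : ℝ) < j := by exact_mod_cast hij
    have := mul_lt_mul_of_pos_left this hδ0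
    show a + δ * i < a + δ * j
    linarith
  have hX0 : X 0 = a := by simp [X]
  have hXN : X (n * n) = b := by
    show a + δ * (n * n : ℕ) = b
    rw [hδn]; ring
  have hXmem : ∀ j ≤ n * n, X j ∈ Icc a b := by
    intro j hj
    exact ⟨hX0 ▸ hXm.monotone (Nat.zero_le j), hXN ▸ hXm.monotone hj⟩
  let u : ℕ → ℝ := fun j => n * (dA - g (X (min j (n * n)))) / M
  have hu : Monotone u := by
    intro i j hij
    have h1 := hanti (X (min i (n * n))) (hXmem _ (min_le_right _ _))
      (X (min j (n * n))) (hXmem _ (min_le_right _ _))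
      (hXm.monotone (min_le_min_right _ hij))
    show n * (dA - g (X (min i (n * n)))) / M ≤ n * (dA - g (X (min j (n * n)))) / M
    gcongr
  have hu0 : ∀ j, 0 ≤ u j := by
    intro j
    have h1 := hanti a ha (X (min j (n * n))) (hXmem _ (min_le_right _ _))
      (hXmem _ (min_le_right _ _)).1
    have : 0 ≤ dA - g (X (min j (n * n))) := by linarith
    show 0 ≤ n * (dA - g (X (min j (n * n)))) / M
    positivity
  have hun : ∀ j, u j ≤ n := by
    intro j
    have h1 := hgM a ha (X (min j (n * n))) (hXmem _ (min_le_right _ _))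
    rw [hga] at h1
    apply div_le_of_le_mul₀ hM0 hnR.le
    gcongr
  obtain ⟨m, j, hm1, hm2, hj0, hjm, hjs, hj⟩ := pl_select n hn1 (fun k => ⌊u k⌋₊)
    (fun i k hik => Nat.floor_le_floor (hu hik)) (fun k => by
      have := Nat.floor_le_floor (hun k)
      rwa [Nat.floor_natCast] at this)
  have hmR : (0 : ℝ) < m := by exact_mod_cast (by omega : 0 < m)
  have hmn : (n : ℝ) ≤ m := by exact_mod_cast hm1
  have hmn3 : (m : ℝ) ≤ 3 * n := by exact_mod_cast hm2
  set E : ℝ := M * δ with hE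
  obtain ⟨l, rfl⟩ : ∃ l, m = l + 2 := ⟨m - 2, by omega⟩
  have hx : StrictMono (fun i => X (j i)) := hXm.comp hjs
  have hjle : ∀ i ≤ l + 2, j i ≤ n * n := by
    intro i hi
    rw [← hjm]; exact hjs.monotone hi
  have hEb : ∀ i < l + 2, (X (j (i + 1)) - X (j i)) * (g (X (j i)) - g (X (j (i + 1)))) ≤ E := by
    intro i hi
    have m0 := hXmem _ (hjle i hi.le)
    have m1 := hXmem _ (hjle (i + 1) hi)
    have hv := hgM _ m0 _ m1
    have hlt := hx (Nat.lt_succ_self i)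
    have hvn := hanti _ m0 _ m1 hlt.le
    have hdiff : X (j (i + 1)) - X (j i) = δ * ((j (i + 1) : ℝ) - j i) := by
      simp only [X]; ring
    rcases hj i hi with h | ⟨h, hF⟩
    · rw [hdiff, h]
      push_cast
      rw [hE]
      have := mul_le_mul_of_nonneg_left hv hδ0.le
      rw [h] at this
      linarith
    · have h' : (j (i + 1) : ℝ) - j i ≤ n := by
        have : (j (i + 1) : ℝ) ≤ j i + n := by exact_mod_cast h
        linarith
      have hvs : n * (g (X (j i)) - g (X (j (i + 1)))) ≤ M := by
        rcases eq_or_lt_of_le hM0 with hz | hz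
        · have : g (X (j i)) - g (X (j (i + 1))) = 0 := by linarith
          rw [this]; linarith
        · have f1 : ((⌊u (j i)⌋₊ : ℕ) : ℝ) ≤ u (j i) := Nat.floor_le (hu0 _)
          have f2 : u (j (i + 1)) < (⌊u (j (i + 1))⌋₊ : ℕ) + 1 := Nat.lt_floor_add_one _
          have hF' : ⌊u (j i)⌋₊ = ⌊u (j (i + 1))⌋₊ := hF
          rw [← hF'] at f2
          have f3 : u (j (i + 1)) - u (j i) ≤ 1 := by linarith
          have f4 : u (j (i + 1)) - u (j i) = n * (g (X (j i)) - g (X (j (i + 1)))) / M := by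
            simp only [u, min_eq_left (hjle i hi.le), min_eq_left (hjle (i + 1) hi)]
            ring
          rw [f4, div_le_iff₀ hz] at f3
          linarith
      rw [hdiff, hE]
      calc δ * ((j (i + 1) : ℝ) - j i) * (g (X (j i)) - g (X (j (i + 1))))
          ≤ δ * n * (g (X (j i)) - g (X (j (i + 1)))) := by
            apply mul_le_mul_of_nonneg_right _ (by linarith)
            exact mul_le_mul_of_nonneg_left h' hδ0.le
        _ = δ * (n * (g (X (j i)) - g (X (j (i + 1))))) := by ring
        _ ≤ δ * M := mul_le_mul_of_nonneg_left hvs hδ0.le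
        _ = M * δ := by ring
  obtain ⟨wt, hwt, hfin⟩ := pl_main a b w g E hw hg hanti l (fun i => X (j i))
    (by show X (j 0) = a; rw [hj0, hX0]) (by show X (j (l + 2)) = b; rw [hjm, hXN]) hx hEb
  refine ⟨l + 2, by omega, by omega, fun i => X (j i), by show X (j 0) = a; rw [hj0, hX0],
    by show X (j (l + 2)) = b; rw [hjm, hXN], fun i _ => hx (Nat.lt_succ_self i), ?_, wt, hwt, ?_⟩
  · intro i hi
    have h1 : (j i : ℝ) + 1 ≤ j (i + 1) := by exact_mod_cast hjs (Nat.lt_succ_self i)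
    have hdiff : X (j (i + 1)) - X (j i) = δ * ((j (i + 1) : ℝ) - j i) := by
      simp only [X]; ring
    show _ ≤ X (j (i + 1)) - X (j i)
    rw [hdiff]
    have h2 : δ * 1 ≤ δ * ((j (i + 1) : ℝ) - j i) :=
      mul_le_mul_of_nonneg_left (by linarith) hδ0.le
    refine le_trans ?_ h2
    rw [mul_one, hδ]
    apply div_le_div_of_nonneg_left (by linarith) (by positivity)
    apply pow_le_pow_left₀ hnR.le
    linarith
  · intro y hy
    refine (hfin y hy).trans ?_
    have h9 : ((l + 2 : ℕ) : ℝ) ^ 2 ≤ 9 * (n : ℝ) ^ 2 := by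
      have := pow_le_pow_left₀ hmR.le hmn3 2
      linarith [this, mul_pow (3 : ℝ) n 2]
    rw [le_div_iff₀ (by positivity)]
    have hEn : E * (n : ℝ) ^ 2 = M * (b - a) := by
      rw [hE, hδ]; field_simp
    have hE0 : 0 ≤ E := by positivity
    nlinarith [mul_le_mul_of_nonneg_left h9 hE0]
end

section
/- Let w : [a,b] → ℝ be a piecewise linear concave function with N knots located at the points a + z₁ < a + z₂ < ⋯ < a + z_N, where 0 < zᵢ < b − a. Then w can be written in the form w(x) = γ₁ ∑_{i=1}^N ((zᵢ ∧ (x−a))/zᵢ) pᵢ − γ₂ (x−a) + γ₃ for all x ∈ [a,b], with parameters satisfying 0 ≤ γ₁ ≤ (w′₊(a) − w′₋(b))(b−a), |γ₂| ≤ |w′₋(b)|, γ₃ ∈ ℝ, pᵢ ≥ 0 for i = 1,…,N, and ∑_{i=1}^N pᵢ = 1. -/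
open MeasureTheory Real Set

/-- a continuous piecewise linear concave function `w` on `[a,b]` with `N`
knots at `a + z 0 < ⋯ < a + z (N-1)` (where `0 < z i < b − a`), affine with slope `c i`
on the `i`-th subinterval `[t i, t (i+1)]` determined by the knots (`t 0 = a`,
`t (i+1) = a + z i`, `t (N+1) = b`) and with a genuine kink at every knot
(`c (i+1) < c i`), can be written as
`w x = γ₁ ∑ᵢ (min (z i) (x−a) / z i) pᵢ − γ₂ (x−a) + γ₃` on `[a,b]`, with
`0 ≤ γ₁ ≤ (w′₊(a) − w′₋(b))(b−a) = (c 0 − c N)(b−a)`, `|γ₂| ≤ |w′₋(b)| = |c N|`,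
`pᵢ ≥ 0` and `∑ᵢ pᵢ = 1`. -/
theorem piecewise_linear_concave_representation
    (a b : ℝ) (hab : a < b) (N : ℕ) (hN : 1 ≤ N)
    (z : Fin N → ℝ) (hzmono : StrictMono z)
    (hz0 : ∀ i, 0 < z i) (hzb : ∀ i, z i < b - a)
    (w : ℝ → ℝ) (hcont : ContinuousOn w (Icc a b))
    (hconc : ConcaveOn ℝ (Icc a b) w)
    (t : ℕ → ℝ) (ht0 : t 0 = a) (htN : t (N + 1) = b)
    (htz : ∀ i : Fin N, t (i + 1) = a + z i)
    (c d : ℕ → ℝ)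
    (haff : ∀ i ≤ N, ∀ y ∈ Icc (t i) (t (i + 1)), w y = c i * y + d i)
    (hkink : ∀ i < N, c (i + 1) < c i) :
    ∃ (γ₁ γ₂ γ₃ : ℝ) (p : Fin N → ℝ),
      0 ≤ γ₁ ∧ γ₁ ≤ (c 0 - c N) * (b - a) ∧ |γ₂| ≤ |c N| ∧
      (∀ i, 0 ≤ p i) ∧ (∑ i, p i) = 1 ∧
      ∀ x ∈ Icc a b,
        w x = γ₁ * (∑ i, min (z i) (x - a) / z i * p i) - γ₂ * (x - a) + γ₃ := by
  have htlt : ∀ k ≤ N, t k < t (k + 1) := by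
    intro k hk
    rcases Nat.eq_zero_or_pos k with h0 | h0
    · subst h0
      have h1 := htz ⟨0, hN⟩
      have h2 := hz0 ⟨0, hN⟩
      simp only at h1
      rw [ht0, h1]; linarith
    · obtain ⟨m, rfl⟩ : ∃ m, k = m + 1 := ⟨k - 1, by omega⟩
      have h1 := htz ⟨m, by omega⟩
      simp only at h1
      rcases Nat.lt_or_ge (m + 1) N with h2 | h2
      · have h3 := htz ⟨m + 1, h2⟩
        simp only at h3
        have h4 : z ⟨m, by omega⟩ < z ⟨m + 1, h2⟩ := hzmono (by simp [Fin.lt_def])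
        rw [h1, h3]; linarith
      · have h3 : m + 1 = N := by omega
        have h4 := hzb ⟨m, by omega⟩
        rw [h1, h3, htN]; linarith
  have htmono : ∀ k ≤ N + 1, ∀ j ≤ k, t j ≤ t k := by
    intro k
    induction k with
    | zero => intro _ j hj; rw [Nat.le_zero.mp hj]
    | succ k ih =>
      intro hk j hj
      rcases Nat.lt_or_ge j (k + 1) with h | h
      · exact (ih (by omega) j (by omega)).trans (htlt k (by omega)).le
      · rw [le_antisymm hj h]
  have key : ∀ k ≤ N, ∀ x ∈ Icc a (t (k + 1)),
      w x = w a + c k * (x - a)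
        + ∑ j ∈ Finset.range k, (c j - c (j + 1)) * min (t (j + 1) - a) (x - a) := by
    intro k
    induction k with
    | zero =>
      intro _ x hx
      have h1 := haff 0 (by omega) x (by rw [ht0]; exact hx)
      have h2 := haff 0 (by omega) a (by rw [ht0]; exact ⟨le_rfl, hx.1.trans hx.2⟩)
      simp only [Finset.range_zero, Finset.sum_empty]
      rw [h1, h2]; ring
    | succ k ih =>
      intro hk x hx
      have hak : a ≤ t (k + 1) := by
        rw [← ht0]; exact htmono _ (by omega) _ (by omega)
      rw [Finset.sum_range_succ]
      rcases le_total x (t (k + 1)) with h | h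
      · rw [ih (by omega) x ⟨hx.1, h⟩, min_eq_right (by linarith : x - a ≤ t (k + 1) - a)]
        ring
      · have h1 := haff (k + 1) hk x ⟨h, hx.2⟩
        have h2 := haff (k + 1) hk (t (k + 1)) ⟨le_rfl, h.trans hx.2⟩
        have h3 := ih (by omega) (t (k + 1)) ⟨hak, le_rfl⟩
        have h4 : ∑ j ∈ Finset.range k, (c j - c (j + 1)) * min (t (j + 1) - a) (x - a)
            = ∑ j ∈ Finset.range k,
              (c j - c (j + 1)) * min (t (j + 1) - a) (t (k + 1) - a) := by
          apply Finset.sum_congr rfl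
          intro j hj
          have hj' := Finset.mem_range.mp hj
          have h5 := htmono (k + 1) (by omega) (j + 1) (by omega)
          rw [min_eq_left (by linarith), min_eq_left (by linarith)]
        rw [h4, min_eq_left (by linarith : t (k + 1) - a ≤ x - a)]
        linarith
  have hq : ∀ i : Fin N, 0 < (c i - c (i + 1)) * z i := fun i =>
    mul_pos (sub_pos.mpr (hkink i i.2)) (hz0 i)
  have hG : 0 < ∑ i : Fin N, (c i - c (i + 1)) * z i :=
    Finset.sum_pos (fun i _ => hq i) ⟨⟨0, hN⟩, Finset.mem_univ _⟩
  refine ⟨∑ i : Fin N, (c i - c (i + 1)) * z i, -c N, w a,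
    fun i => (c i - c (i + 1)) * z i / ∑ i : Fin N, (c i - c (i + 1)) * z i,
    hG.le, ?_, by rw [abs_neg], fun i => (div_pos (hq i) hG).le, ?_, ?_⟩
  · have h1 : ∑ i : Fin N, (c i - c (i + 1)) = c 0 - c N := by
      rw [Fin.sum_univ_eq_sum_range (fun i => c i - c (i + 1)) N, Finset.sum_range_sub']
    rw [← h1, Finset.sum_mul]
    exact Finset.sum_le_sum fun i _ =>
      mul_le_mul_of_nonneg_left (hzb i).le (sub_pos.mpr (hkink i i.2)).le
  · rw [← Finset.sum_div, div_self hG.ne']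
  · intro x hx
    have h1 := key N le_rfl x (by rw [htN]; exact hx)
    rw [h1, Finset.mul_sum,
      ← Fin.sum_univ_eq_sum_range (fun j => (c j - c (j + 1)) * min (t (j + 1) - a) (x - a)) N]
    have h2 : ∀ i : Fin N, (c i - c (i + 1)) * min (t (i + 1) - a) (x - a)
        = (∑ i : Fin N, (c i - c (i + 1)) * z i) * (min (z i) (x - a) / z i *
          ((c i - c (i + 1)) * z i / ∑ i : Fin N, (c i - c (i + 1)) * z i)) := by
      intro i
      rw [htz i, add_sub_cancel_left]
      have := (hz0 i).ne'
      have := hG.ne'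
      field_simp
    rw [Finset.sum_congr rfl fun i _ => h2 i]
    ring
end

section
/- Let f₀ ∈ F_{α,β} for some α > 0, β ∈ ℝ, and let ([aₙ,bₙ]) be a sequence of compact intervals such that [−(8/(5α)) log n, (8/(5α)) log n] ⊂ [aₙ,bₙ] and (bₙ − aₙ) = o(n^{4/5}). Then for every n ≥ n₀, where n₀ is an integer depending only on α and β, there exists a log-concave density f̄ₙ that is piecewise log-linear with N̄ ≤ C(α,β) n^{1/5} log n knots z₁,…,z_{N̄} ∈ [0, bₙ − aₙ] satisfying: (i) h²(f₀, f̄ₙ) ≤ C(α,β) [ (log n)² n^{−4/5} + (bₙ−aₙ)² n^{−8/5} ]; (ii) { x ∈ ℝ : f̄ₙ(x) > 0 } = [aₙ, bₙ]; (iii) the knots are c n^{−6/5} log n-separated for some universal constant c > 0; (iv) f₀(x) ≤ C(α,β) f̄ₙ(x) for all x ∈ [aₙ, bₙ]; (v) there exist γ̄₁ ∈ [0, 2(bₙ−aₙ) n^{4/5}], γ̄₂ with |γ̄₂| ≤ n^{4/5}, γ̄₃ ∈ ℝ, and p̄₁,…,p̄_{N̄} with p̄ᵢ ≥ 0 and ∑_{i=1}^{N̄}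 p̄ᵢ = 1, such that f̄ₙ(x) = exp( γ̄₁ ∑_{i=1}^{N̄} ((zᵢ ∧ (x−aₙ))/zᵢ) p̄ᵢ − γ̄₂ (x−aₙ) + γ̄₃ ) · 1_{[aₙ,bₙ]}(x). Here C(α,β) denotes a constant depending only on α and β. -/
open MeasureTheory Real Set Asymptotics Filter

/-- A probability density on ℝ: measurable, nonnegative, integrating to one. -/
def IsDensityFn (f : ℝ → ℝ) : Prop :=
  Measurable f ∧ (∀ x, 0 ≤ f x) ∧ ∫ x, f x = 1

/-- Log-concavity of a nonnegative function (multiplicative form, allowing zeros). -/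
def IsLogConcaveFn (f : ℝ → ℝ) : Prop :=
  ∀ x y t : ℝ, 0 ≤ t → t ≤ 1 →
    f x ^ t * f y ^ (1 - t) ≤ f (t * x + (1 - t) * y)

/-- Membership in `F_{α,β}`: an upper semi-continuous log-concave probability density
with the envelope bound `f x ≤ e^{β − α|x|}`. -/
def MemF (α β : ℝ) (f : ℝ → ℝ) : Prop :=
  IsDensityFn f ∧ UpperSemicontinuous f ∧ IsLogConcaveFn f ∧
    ∀ x : ℝ, f x ≤ Real.exp (β - α * |x|)

/-- The squared Hellinger distance between two densities on ℝ. -/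
noncomputable def hellingerSq (p q : ℝ → ℝ) : ℝ :=
  ∫ x, (Real.sqrt (p x) - Real.sqrt (q x)) ^ 2

lemma integral_lap (a τ : ℝ) (ha : 0 < a) : ∫ x : ℝ, exp (-(a * |x - τ|)) = 2 / a := by
  rw [integral_sub_right_eq_self (fun x : ℝ => exp (-(a * |x|))) τ]
  rw [integral_comp_abs (f := fun x => exp (-(a * x)))]
  have := integral_exp_mul_Ioi (a := -a) (by linarith) 0
  simp only [neg_mul] at this
  rw [this]; simp; field_simp

lemma integrable_lap (a τ : ℝ) (ha : 0 < a) : Integrable (fun x : ℝ => exp (-(a * |x - τ|))) := by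
  by_contra h
  have h1 := integral_undef h
  rw [integral_lap a τ ha] at h1
  have : 0 < 2 / a := by positivity
  linarith

lemma IsLogConcaveFn.mul_exp {f : ℝ → ℝ} (hf : IsLogConcaveFn f) (h0 : ∀ x, 0 ≤ f x) (G : ℝ) :
    IsLogConcaveFn (fun x => f x * exp (G * x)) := by
  intro x y t ht0 ht1
  simp only
  rw [mul_rpow (h0 _) (exp_pos _).le, mul_rpow (h0 _) (exp_pos _).le, ← exp_mul, ← exp_mul]
  have e : exp (G * (t * x + (1 - t) * y)) = exp (G * x * t) * exp (G * y * (1 - t)) := by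
    rw [← exp_add]; congr 1; ring
  rw [e]
  have := hf x y t ht0 ht1
  calc _ = (f x ^ t * f y ^ (1 - t)) * (exp (G * x * t) * exp (G * y * (1 - t))) := by ring
    _ ≤ _ := by gcongr

lemma IsLogConcaveFn.quasi {f : ℝ → ℝ} (hf : IsLogConcaveFn f) (h0 : ∀ x, 0 ≤ f x)
    {a b c : ℝ} (hab : a ≤ b) (hbc : b ≤ c) : min (f a) (f c) ≤ f b := by
  rcases eq_or_lt_of_le (hab.trans hbc) with h | h
  · have : a = b := by linarith
    subst this; exact min_le_left _ _
  have hca : 0 < c - a := by linarith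
  set t := (c - b) / (c - a) with ht
  have ht0 : 0 ≤ t := div_nonneg (by linarith) hca.le
  have ht1 : t ≤ 1 := by rw [ht, div_le_one hca]; linarith
  have hb : t * a + (1 - t) * c = b := by rw [ht]; field_simp; ring
  have key := hf a c t ht0 ht1
  rw [hb] at key
  refine le_trans ?_ key
  set m := min (f a) (f c) with hm
  have hm0 : 0 ≤ m := le_min (h0 _) (h0 _)
  rcases eq_or_lt_of_le hm0 with h' | h'
  · rw [← h']; exact mul_nonneg (rpow_nonneg (h0 _) _) (rpow_nonneg (h0 _) _)
  calc m = m ^ t * m ^ (1 - t) := by rw [← rpow_add h']; simp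
    _ ≤ _ := mul_le_mul (rpow_le_rpow hm0 (min_le_left _ _) ht0)
      (rpow_le_rpow hm0 (min_le_right _ _) (by linarith)) (rpow_nonneg hm0 _) (rpow_nonneg (h0 _) _)

lemma one_side {f : ℝ → ℝ} (hf : IsLogConcaveFn f) (h0 : ∀ x, 0 ≤ f x) {β G : ℝ} (hG : 0 < G)
    (hb : ∀ x, f x ≤ exp β) :
    ∃ τ : ℝ, ∀ x y : ℝ, y ≤ x →
      f y * exp (-(G * (x - y))) - f x ≤ exp β * exp (-(G * |x - τ|)) := by
  set k : ℝ → ℝ := fun x => f x * exp (G * x) with hk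
  have hkc : IsLogConcaveFn k := hf.mul_exp h0 G
  have hk0 : ∀ x, 0 ≤ k x := fun x => mul_nonneg (h0 x) (exp_pos _).le
  have hkb : ∀ x, k x ≤ exp (β + G * x) := fun x => by
    rw [exp_add]; exact mul_le_mul_of_nonneg_right (hb x) (exp_pos _).le
  set U : Set ℝ := {x | ∃ y < x, k x < k y} with hU
  have hanti : ∀ x x', x ∈ U → x < x' → k x' ≤ k x := by
    rintro x x' ⟨y, hy, hxy⟩ hx
    have := hkc.quasi hk0 hy.le hx.le
    rcases min_le_iff.1 this with h | h
    · linarith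
    · exact h
  have hup : ∀ x x', x ∈ U → x < x' → x' ∈ U := by
    intro x x' hx hxx
    obtain ⟨y, hy, hxy⟩ := hx
    exact ⟨y, hy.trans hxx, (hanti x x' ⟨y, hy, hxy⟩ hxx).trans_lt hxy⟩
  -- key contradiction
  have key : ∀ q y : ℝ, 0 < k y → (∃ y' ∈ U, y' < y ∧ y' < (log (k y) - β) / G) → False := by
    rintro - y hy ⟨y', hy', h1, h2⟩
    have h3 := (hanti y' y hy' h1).trans (hkb y')
    rw [lt_div_iff₀ hG] at h2
    have h4 : exp (β + G * y') < exp (log (k y)) := exp_lt_exp.2 (by linarith)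
    rw [exp_log hy] at h4
    linarith
  have conv : ∀ x y, f y * exp (-(G * (x - y))) = k y * exp (-(G * x)) := by
    intro x y
    simp only [hk]
    rw [mul_assoc, ← exp_add]; congr 2; ring
  have conv' : ∀ x, f x = k x * exp (-(G * x)) := by
    intro x
    have := conv x x
    simpa using this
  by_cases hne : U.Nonempty
  swap
  · refine ⟨0, fun x y hyx => ?_⟩
    have hx : x ∉ U := fun h => hne ⟨x, h⟩
    have : k y ≤ k x := by
      rcases eq_or_lt_of_le hyx with h | h
      · rw [h]
      · by_contra hc
        exact hx ⟨y, h, not_le.1 hc⟩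
    have h1 : f y * exp (-(G * (x - y))) ≤ f x := by
      rw [conv, conv' x]; gcongr
    have : 0 ≤ exp β * exp (-(G * |x - 0|)) := by positivity
    linarith
  have hbdd : BddBelow U := by
    by_contra hb'
    obtain ⟨x, y, hy, hxy⟩ := hne
    have hpos : 0 < k y := (hk0 x).trans_lt hxy
    rw [not_bddBelow_iff] at hb'
    obtain ⟨y', hy', h⟩ := hb' (min y ((log (k y) - β) / G))
    exact key 0 y hpos ⟨y', hy', lt_of_lt_of_le h (min_le_left _ _), lt_of_lt_of_le h (min_le_right _ _)⟩
  refine ⟨sInf U, fun x y hyx => ?_⟩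
  by_cases hx : x ∈ U
  · have hτx : sInf U ≤ x := csInf_le hbdd hx
    rw [abs_of_nonneg (by linarith)]
    have hky : k y ≤ exp (β + G * sInf U) := by
      rcases le_or_gt y (sInf U) with h | h
      · exact (hkb y).trans (exp_le_exp.2 (by nlinarith))
      · by_contra hc
        rw [not_le] at hc
        have hpos : 0 < k y := (exp_pos _).trans hc
        have h2 : sInf U < (log (k y) - β) / G := by
          rw [lt_div_iff₀ hG]
          have := log_lt_log (exp_pos _) hc
          rw [log_exp] at this; linarith
        obtain ⟨y', hy', h3⟩ := exists_lt_of_csInf_lt hne (lt_min h h2)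
        exact key 0 y hpos ⟨y', hy', lt_of_lt_of_le h3 (min_le_left _ _), lt_of_lt_of_le h3 (min_le_right _ _)⟩
    have h1 : f y * exp (-(G * (x - y))) ≤ exp β * exp (-(G * (x - sInf U))) := by
      rw [conv, ← exp_add]
      calc _ ≤ exp (β + G * sInf U) * exp (-(G * x)) := by gcongr
        _ = _ := by rw [← exp_add]; congr 1; ring
    linarith [h0 x]
  · have : k y ≤ k x := by
      rcases eq_or_lt_of_le hyx with h | h
      · rw [h]
      · by_contra hc
        exact hx ⟨y, h, not_le.1 hc⟩
    have h1 : f y * exp (-(G * (x - y))) ≤ f x := by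
      rw [conv, conv' x]; gcongr
    have : 0 ≤ exp β * exp (-(G * |x - sInf U|)) := by positivity
    linarith

lemma peak (α β : ℝ) (hα : 0 < α) : ∃ h₀ : ℝ, 0 ≤ h₀ ∧ ∀ f, MemF α β f → ∃ x, exp (-h₀) ≤ f x := by
  obtain ⟨h₀, hh, hh'⟩ : ∃ h₀ : ℝ, 0 ≤ h₀ ∧ exp (-(h₀ / 2)) * (exp (β / 2) * (4 / α)) < 1 := by
    have h : Tendsto (fun h : ℝ => exp (-(h / 2)) * (exp (β / 2) * (4 / α))) atTop (nhds (0 * (exp (β / 2) * (4 / α)))) := by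
      apply Tendsto.mul_const
      exact tendsto_exp_neg_atTop_nhds_zero.comp (tendsto_id.atTop_div_const (by norm_num))
    rw [zero_mul] at h
    obtain ⟨h₀, h1, h2⟩ := ((eventually_ge_atTop 0).and (h.eventually_lt_const one_pos)).exists
    exact ⟨h₀, h1, h2⟩
  refine ⟨h₀, hh, fun f hf => ?_⟩
  by_contra hc
  push Not at hc
  obtain ⟨⟨hm, h0, hI⟩, -, -, henv⟩ := hf
  have hle : ∀ x, f x ≤ exp (-(h₀ / 2)) * exp (β / 2) * exp (-(α / 2 * |x - 0|)) := by
    intro x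
    have h1 := (hc x).le
    have h2 := henv x
    have : f x ^ 2 ≤ (exp (-(h₀ / 2)) * exp (β / 2) * exp (-(α / 2 * |x - 0|))) ^ 2 := by
      have e : (exp (-(h₀ / 2)) * exp (β / 2) * exp (-(α / 2 * |x - 0|))) ^ 2 = exp (-h₀) * exp (β - α * |x|) := by
        rw [← exp_add, ← exp_add, ← exp_nat_mul, ← exp_add]; congr 1; simp; ring
      rw [e, sq]
      exact mul_le_mul h1 h2 (h0 x) (exp_pos _).le
    exact le_of_sq_le_sq this (by positivity)
  have : ∫ x, f x ≤ ∫ x, exp (-(h₀ / 2)) * exp (β / 2) * exp (-(α / 2 * |x - 0|)) :=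
    integral_mono_of_nonneg (Eventually.of_forall h0) ((integrable_lap _ _ (by positivity)).const_mul _)
      (Eventually.of_forall hle)
  rw [integral_const_mul, integral_lap _ _ (by positivity), hI] at this
  have e : exp (-(h₀ / 2)) * exp (β / 2) * (2 / (α / 2)) = exp (-(h₀ / 2)) * (exp (β / 2) * (4 / α)) := by
    field_simp; ring
  linarith

lemma regularize {α β : ℝ} {f : ℝ → ℝ} (hα : 0 < α) (hf : MemF α β f) {G : ℝ} (hG : α ≤ G) :
    ∃ u : ℝ → ℝ, ConcaveOn ℝ univ u ∧ (∀ x y, u x ≤ u y + G * |x - y|) ∧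
      (∀ x, f x ≤ exp (u x)) ∧ (∀ x, u x ≤ β - α * |x|) ∧
      ∃ τ₁ τ₂ : ℝ, ∀ x, exp (u x) - f x ≤
        exp β * exp (-(G * |x - τ₁|)) + exp β * exp (-(G * |x - τ₂|)) := by
  have hG0 : 0 < G := hα.trans_le hG
  obtain ⟨h₀, -, hpk⟩ := peak α β hα
  obtain ⟨xs, hxs⟩ := hpk f hf
  obtain ⟨⟨hm, h0, hI⟩, -, hlc, henv⟩ := hf
  have hfs : 0 < f xs := (exp_pos _).trans_le hxs
  set F : ℝ → ℝ → ℝ := fun x y => f y * exp (-(G * |x - y|)) with hF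
  have hFb : ∀ x y, F x y ≤ exp (β - α * |x|) := by
    intro x y
    calc F x y ≤ exp (β - α * |y|) * exp (-(G * |x - y|)) :=
          mul_le_mul_of_nonneg_right (henv y) (exp_pos _).le
      _ = exp (β - α * |y| + -(G * |x - y|)) := by rw [exp_add]
      _ ≤ _ := by
        apply exp_le_exp.2
        have h1 : |x| ≤ |x - y| + |y| := by
          have := abs_add_le (x - y) y
          simpa using this
        have h2 : 0 ≤ |x - y| := abs_nonneg _
        nlinarith
  have hbdd : ∀ x, BddAbove (range (F x)) := fun x => ⟨_, by rintro _ ⟨y, rfl⟩; exact hFb x y⟩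
  set v : ℝ → ℝ := fun x => ⨆ y, F x y with hv
  have hFv : ∀ x y, F x y ≤ v x := fun x y => le_ciSup (hbdd x) y
  have hvpos : ∀ x, 0 < v x := fun x => lt_of_lt_of_le (mul_pos hfs (exp_pos _)) (hFv x xs)
  have hfv : ∀ x, f x ≤ v x := fun x => by
    have := hFv x x
    simpa [hF] using this
  have hvexp : ∀ x, exp (log (v x)) = v x := fun x => exp_log (hvpos x)
  refine ⟨fun x => log (v x), ⟨convex_univ, ?_⟩, ?_, ?_, ?_, ?_⟩
  · rintro x - y - a b ha hb hab
    simp only [smul_eq_mul]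
    apply le_of_forall_pos_le_add
    intro ε hε
    have hex : ∀ x, ∃ y, v x * exp (-ε) < F x y := fun x => by
      apply exists_lt_of_lt_ciSup
      have : exp (-ε) < 1 := by rw [← exp_zero]; exact exp_lt_exp.2 (by linarith)
      have := hvpos x
      change v x * exp (-ε) < v x
      nlinarith
    obtain ⟨y₁, h1⟩ := hex x
    obtain ⟨y₂, h2⟩ := hex y
    have hp1 : 0 < f y₁ := by
      have : 0 < F x y₁ := (mul_pos (hvpos x) (exp_pos _)).trans h1
      exact (pos_iff_pos_of_mul_pos this).2 (exp_pos _)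
    have hp2 : 0 < f y₂ := by
      have : 0 < F y y₂ := (mul_pos (hvpos y) (exp_pos _)).trans h2
      exact (pos_iff_pos_of_mul_pos this).2 (exp_pos _)
    have l1 := (log_lt_log (mul_pos (hvpos x) (exp_pos _)) h1).le
    have l2 := (log_lt_log (mul_pos (hvpos y) (exp_pos _)) h2).le
    simp only [hF] at l1 l2
    rw [log_mul (hvpos _).ne' (exp_pos _).ne', log_mul hp1.ne' (exp_pos _).ne', log_exp, log_exp] at l1
    rw [log_mul (hvpos _).ne' (exp_pos _).ne', log_mul hp2.ne' (exp_pos _).ne', log_exp, log_exp] at l2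
    have l3 := hlc y₁ y₂ a ha (by linarith)
    have hb' : 1 - a = b := by linarith
    rw [hb'] at l3
    have hp3 : 0 < f y₁ ^ a * f y₂ ^ b := mul_pos (rpow_pos_of_pos hp1 _) (rpow_pos_of_pos hp2 _)
    have l4 := log_le_log hp3 l3
    rw [log_mul (rpow_pos_of_pos hp1 _).ne' (rpow_pos_of_pos hp2 _).ne', log_rpow hp1, log_rpow hp2] at l4
    have hp4 : 0 < f (a * y₁ + b * y₂) := hp3.trans_le l3
    have l5 := log_le_log (mul_pos hp4 (exp_pos _)) (hFv (a * x + b * y) (a * y₁ + b * y₂))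
    rw [log_mul hp4.ne' (exp_pos _).ne', log_exp] at l5
    have l6 : |a * x + b * y - (a * y₁ + b * y₂)| ≤ a * |x - y₁| + b * |y - y₂| := by
      calc _ = |a * (x - y₁) + b * (y - y₂)| := by congr 1; ring
        _ ≤ |a * (x - y₁)| + |b * (y - y₂)| := abs_add_le _ _
        _ = _ := by rw [abs_mul, abs_mul, abs_of_nonneg ha, abs_of_nonneg hb]
    have l7 := mul_le_mul_of_nonneg_left l6 hG0.le
    have l8 := mul_le_mul_of_nonneg_left l1 ha
    have l9 := mul_le_mul_of_nonneg_left l2 hb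
    have : a * ε + b * ε = ε := by rw [← add_mul, hab, one_mul]
    linarith
  · intro x y
    rw [← log_exp (G * |x - y|), ← log_mul (hvpos _).ne' (exp_pos _).ne']
    apply log_le_log (hvpos x)
    apply ciSup_le
    intro z
    calc F x z ≤ F y z * exp (G * |x - y|) := by
          simp only [hF]
          rw [mul_assoc, ← exp_add]
          apply mul_le_mul_of_nonneg_left _ (h0 z)
          apply exp_le_exp.2
          have : |y - z| ≤ |x - y| + |x - z| := by
            rw [abs_sub_comm x y]; exact abs_sub_le y x z
          nlinarith
      _ ≤ _ := mul_le_mul_of_nonneg_right (hFv y z) (exp_pos _).le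
  · intro x; rw [hvexp]; exact hfv x
  · intro x
    have : v x ≤ exp (β - α * |x|) := ciSup_le (hFb x)
    have := log_le_log (hvpos x) this
    rwa [log_exp] at this
  · have hfb : ∀ x, f x ≤ exp β := fun x => (henv x).trans (exp_le_exp.2 (by
      have := mul_nonneg hα.le (abs_nonneg x); linarith))
    obtain ⟨τ₁, h1⟩ := one_side hlc h0 hG0 hfb
    have hlc' : IsLogConcaveFn (fun x => f (-x)) := by
      intro x y t ht0 ht1
      have := hlc (-x) (-y) t ht0 ht1
      simp only
      convert this using 2; ring
    obtain ⟨τ₂, h2⟩ := one_side hlc' (fun x => h0 (-x)) hG0 (fun x => hfb (-x))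
    refine ⟨τ₁, -τ₂, fun x => ?_⟩
    rw [hvexp]
    have p1 : 0 ≤ exp β * exp (-(G * |x - τ₁|)) := by positivity
    have p2 : 0 ≤ exp β * exp (-(G * |x - -τ₂|)) := by positivity
    rw [sub_le_iff_le_add]
    apply ciSup_le
    intro y
    simp only [hF]
    rcases le_total y x with h | h
    · have := h1 x y h
      rw [abs_of_nonneg (by linarith : 0 ≤ x - y)]
      linarith
    · have := h2 (-x) (-y) (by linarith)
      simp only [neg_neg] at this
      rw [abs_of_nonpos (by linarith : x - y ≤ 0)]
      have e1 : |-x - τ₂| = |x - -τ₂| := by rw [← abs_neg]; congr 1; ring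
      have e2 : -x - -y = -(x - y) := by ring
      rw [e1, e2] at this
      linarith

lemma cluster (I : Finset ℕ) (d : ℕ → ℝ) (δ ε lo hi : ℝ) (κ : ℕ → ℕ) (K : ℕ) (hδ : 0 < δ)
    (hε : 0 ≤ ε) (hd : ∀ j ∈ I, 0 ≤ d j)
    (hκ : ∀ a ∈ I, ∀ b ∈ I, a ≤ b → κ a ≤ κ b) (hK : ∀ j ∈ I, κ j < K)
    (hlo : ∀ j ∈ I, lo ≤ j * δ) (hhi : ∀ j ∈ I, j * δ ≤ hi)
    (hc : ∀ a ∈ I, ∀ b ∈ I, a ≤ b → κ a = κ b →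
      ((b : ℝ) - a) * δ * (∑ j ∈ I with (a ≤ j ∧ j ≤ b), d j) ≤ ε) :
    ∃ (N : ℕ) (Z D : Fin N → ℝ), N ≤ K ∧ StrictMono Z ∧ (∀ i j, i ≠ j → δ ≤ |Z i - Z j|) ∧
      (∀ i, lo ≤ Z i ∧ Z i ≤ hi) ∧ (∀ i, 0 < D i) ∧ ∑ i, D i = ∑ j ∈ I, d j ∧
      ∑ i, D i * Z i = ∑ j ∈ I, d j * (j * δ) ∧
      ∀ y : ℝ, ∑ i, D i * max (y - Z i) 0 ≤ ∑ j ∈ I, d j * max (y - j * δ) 0 ∧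
        ∑ j ∈ I, d j * max (y - j * δ) 0 ≤ ∑ i, D i * max (y - Z i) 0 + ε := by
  classical
  set D' : ℕ → ℝ := fun k => ∑ j ∈ I with κ j = k, d j with hD'
  set S' : ℕ → ℝ := fun k => ∑ j ∈ I with κ j = k, d j * (j * δ) with hS'
  set Z' : ℕ → ℝ := fun k => S' k / D' k with hZ'
  set J : Finset ℕ := (I.image κ).filter (fun k => 0 < D' k) with hJ
  have hD0 : ∀ k, 0 ≤ D' k := fun k => Finset.sum_nonneg fun j hj => hd j (Finset.mem_filter.1 hj).1
  have hJpos : ∀ k ∈ J, 0 < D' k := fun k hk => (Finset.mem_filter.1 hk).2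
  have hDZ : ∀ k ∈ J, D' k * Z' k = S' k := fun k hk => by
    have := hJpos k hk
    simp only [hZ']; field_simp
  -- transfer of sums
  have hsum : ∀ g : ℕ → ℝ, ∑ j ∈ I, d j * g j = ∑ k ∈ J, ∑ j ∈ I with κ j = k, d j * g j := by
    intro g
    rw [← Finset.sum_fiberwise_of_maps_to (s := I) (t := I.image κ) (g := κ)
      (fun j hj => Finset.mem_image_of_mem κ hj)]
    symm
    apply Finset.sum_subset (Finset.filter_subset _ _)
    intro k hk hkJ
    have hz : D' k = 0 := by
      by_contra hne
      exact hkJ (Finset.mem_filter.2 ⟨hk, lt_of_le_of_ne (hD0 k) (Ne.symm hne)⟩)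
    have hz' := (Finset.sum_eq_zero_iff_of_nonneg
      (fun j hj => hd j (Finset.mem_filter.1 hj).1)).1 hz
    apply Finset.sum_eq_zero
    intro j hj
    rw [hz' j hj, zero_mul]
  have havg : ∀ k ∈ J, ∀ p q : ℝ, (∀ j ∈ I, κ j = k → p ≤ j * δ ∧ j * δ ≤ q) →
      p ≤ Z' k ∧ Z' k ≤ q := by
    intro k hk p q h
    have hpos := hJpos k hk
    simp only [hZ']
    rw [le_div_iff₀ hpos, div_le_iff₀ hpos]
    simp only [hD', hS', Finset.mul_sum]
    constructor
    · apply Finset.sum_le_sum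
      intro j hj
      obtain ⟨h1, h2⟩ := Finset.mem_filter.1 hj
      nlinarith [hd j h1, (h j h1 h2).1]
    · apply Finset.sum_le_sum
      intro j hj
      obtain ⟨h1, h2⟩ := Finset.mem_filter.1 hj
      nlinarith [hd j h1, (h j h1 h2).2]
  have hlt : ∀ i ∈ I, ∀ j ∈ I, κ i < κ j → i < j := by
    intro i hi' j hj h
    by_contra hc'
    exact absurd (hκ j hj i hi' (not_lt.1 hc')) (not_le.2 h)
  have hsep : ∀ k ∈ J, ∀ k' ∈ J, k < k' → Z' k + δ ≤ Z' k' := by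
    intro k hk k' hk' hkk
    have hne : (I.filter (fun j => κ j = k)).Nonempty := by
      obtain ⟨j, hj, hjk⟩ := Finset.mem_image.1 (Finset.mem_filter.1 hk).1
      exact ⟨j, Finset.mem_filter.2 ⟨hj, hjk⟩⟩
    set b := (I.filter (fun j => κ j = k)).max' hne with hb
    have hbm := Finset.mem_filter.1 (Finset.max'_mem _ hne)
    rw [← hb] at hbm
    have h1 : Z' k ≤ b * δ := by
      refine (havg k hk lo (b * δ) fun j hj hjk => ⟨hlo j hj, ?_⟩).2
      have : j ≤ b := Finset.le_max' _ _ (Finset.mem_filter.2 ⟨hj, hjk⟩)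
      have : (j : ℝ) ≤ b := by exact_mod_cast this
      nlinarith
    have h2 : (b + 1) * δ ≤ Z' k' := by
      refine (havg k' hk' ((b + 1) * δ) hi fun j hj hjk => ⟨?_, hhi j hj⟩).1
      have : b < j := hlt b hbm.1 j hj (by rw [hbm.2, hjk]; exact hkk)
      have : (b : ℝ) + 1 ≤ j := by exact_mod_cast this
      nlinarith
    linarith
  set e := J.orderEmbOfFin rfl with he
  have hemem : ∀ i, e i ∈ J := fun i => Finset.orderEmbOfFin_mem J rfl i
  have htr : ∀ g : ℕ → ℝ, ∑ i, g (e i) = ∑ k ∈ J, g k := by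
    intro g
    conv_rhs => rw [← Finset.image_orderEmbOfFin_univ J rfl]
    rw [Finset.sum_image (fun a _ b _ h => e.injective h)]
  refine ⟨J.card, fun i => Z' (e i), fun i => D' (e i), ?_, ?_, ?_, ?_, ?_, ?_, ?_, ?_⟩
  · have : J ⊆ Finset.range K := by
      intro k hk
      obtain ⟨j, hj, hjk⟩ := Finset.mem_image.1 (Finset.mem_filter.1 hk).1
      rw [← hjk]; exact Finset.mem_range.2 (hK j hj)
    simpa using Finset.card_le_card this
  · intro i j hij
    have := hsep _ (hemem i) _ (hemem j) (e.strictMono hij)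
    simp only; linarith
  · intro i j hij
    rcases lt_or_gt_of_ne hij with h | h
    · have := hsep _ (hemem i) _ (hemem j) (e.strictMono h)
      rw [abs_sub_comm]
      exact le_trans (by linarith) (le_abs_self _)
    · have := hsep _ (hemem j) _ (hemem i) (e.strictMono h)
      exact le_trans (by linarith) (le_abs_self _)
  · intro i
    exact havg _ (hemem i) lo hi fun j hj _ => ⟨hlo j hj, hhi j hj⟩
  · intro i; exact hJpos _ (hemem i)
  · rw [htr D']
    have := hsum (fun _ => 1)
    simp only [mul_one] at this
    rw [this]
  · rw [htr (fun k => D' k * Z' k), hsum (fun j => j * δ)]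
    exact Finset.sum_congr rfl hDZ
  · intro y
    rw [htr (fun k => D' k * max (y - Z' k) 0), hsum (fun j => max (y - j * δ) 0)]
    have hlin : ∀ k ∈ J, ∑ j ∈ I with κ j = k, d j * (y - j * δ) = D' k * (y - Z' k) := by
      intro k hk
      rw [mul_sub, hDZ k hk]
      simp only [hD', hS', mul_sub, Finset.sum_sub_distrib, Finset.sum_mul]
    have hnn : ∀ k, ∀ j ∈ I.filter (fun j => κ j = k), 0 ≤ d j :=
      fun k j hj => hd j (Finset.mem_filter.1 hj).1
    constructor
    · apply Finset.sum_le_sum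
      intro k hk
      rw [mul_max_of_nonneg _ _ (hD0 k), mul_zero, ← hlin k hk]
      apply max_le
      · apply Finset.sum_le_sum
        intro j hj
        exact mul_le_mul_of_nonneg_left (le_max_left _ _) (hnn k j hj)
      · exact Finset.sum_nonneg fun j hj => mul_nonneg (hnn k j hj) (le_max_right _ _)
    · set t : ℕ → ℝ := fun k => ∑ j ∈ I with κ j = k, d j * max (y - j * δ) 0 -
        D' k * max (y - Z' k) 0 with ht
      suffices h : ∑ k ∈ J, t k ≤ ε by
        simp only [ht, Finset.sum_sub_distrib] at h
        linarith
      have hcase : ∀ k ∈ J, 0 < t k → (∃ j ∈ I, κ j = k ∧ y < j * δ) ∧ (∃ j ∈ I, κ j = k ∧ j * δ < y) := by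
        intro k hk hpos
        constructor
        · by_contra hcon
          push Not at hcon
          have : ∑ j ∈ I with κ j = k, d j * max (y - j * δ) 0 = D' k * (y - Z' k) := by
            rw [← hlin k hk]
            apply Finset.sum_congr rfl
            intro j hj
            obtain ⟨h1, h2⟩ := Finset.mem_filter.1 hj
            rw [max_eq_left (by linarith [hcon j h1 h2])]
          have h3 : D' k * (y - Z' k) ≤ D' k * max (y - Z' k) 0 :=
            mul_le_mul_of_nonneg_left (le_max_left _ _) (hD0 k)
          simp only [ht] at hpos
          linarith
        · by_contra hcon
          push Not at hcon
          have : ∑ j ∈ I with κ j = k, d j * max (y - j * δ) 0 = 0 := by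
            apply Finset.sum_eq_zero
            intro j hj
            obtain ⟨h1, h2⟩ := Finset.mem_filter.1 hj
            rw [max_eq_right (by linarith [hcon j h1 h2]), mul_zero]
          have h3 : 0 ≤ D' k * max (y - Z' k) 0 :=
            mul_nonneg (hD0 k) (le_max_right _ _)
          simp only [ht] at hpos
          linarith
      have hle : ∀ k ∈ J, 0 < t k → t k ≤ ε := by
        intro k hk hpos
        obtain ⟨⟨j₁, hj₁, hk₁, hy₁⟩, ⟨j₂, hj₂, hk₂, hy₂⟩⟩ := hcase k hk hpos
        have hne : (I.filter (fun j => κ j = k)).Nonempty := ⟨j₁, Finset.mem_filter.2 ⟨hj₁, hk₁⟩⟩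
        obtain ⟨b, hbm, hbmax⟩ := Finset.exists_max_image _ id hne
        obtain ⟨a, ham, hamin⟩ := Finset.exists_min_image _ id hne
        simp only [id] at hbmax hamin
        obtain ⟨ha1, ha2⟩ := Finset.mem_filter.1 ham
        obtain ⟨hb1, hb2⟩ := Finset.mem_filter.1 hbm
        have hab : a ≤ b := hamin b hbm
        have hD'le : D' k = ∑ j ∈ I with (a ≤ j ∧ j ≤ b), d j := by
          simp only [hD']
          apply Finset.sum_congr _ (fun _ _ => rfl)
          ext j
          simp only [Finset.mem_filter]
          constructor
          · rintro ⟨h1, h2⟩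
            exact ⟨h1, hamin j (Finset.mem_filter.2 ⟨h1, h2⟩), hbmax j (Finset.mem_filter.2 ⟨h1, h2⟩)⟩
          · rintro ⟨h1, h2, h3⟩
            exact ⟨h1, le_antisymm (hb2 ▸ hκ j h1 b hb1 h3) (ha2 ▸ hκ a ha1 j h1 h2)⟩
        have h := hc a ha1 b hb1 hab (by rw [ha2, hb2])
        rw [← hD'le] at h
        have hyb : y ≤ b * δ := by
          have : j₁ ≤ b := hbmax j₁ (Finset.mem_filter.2 ⟨hj₁, hk₁⟩)
          have : (j₁ : ℝ) ≤ b := by exact_mod_cast this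
          nlinarith
        have h1 : ∑ j ∈ I with κ j = k, d j * max (y - j * δ) 0 ≤ D' k * ((b - a) * δ) := by
          simp only [hD', Finset.sum_mul]
          apply Finset.sum_le_sum
          intro j hj
          apply mul_le_mul_of_nonneg_left _ (hnn k j hj)
          have hbR : (a : ℝ) ≤ b := by exact_mod_cast hab
          have hjR : (a : ℝ) ≤ j := by exact_mod_cast hamin j hj
          apply max_le
          · nlinarith
          · nlinarith
        have h3 : 0 ≤ D' k * max (y - Z' k) 0 :=
            mul_nonneg (hD0 k) (le_max_right _ _)
        simp only [ht]
        nlinarith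
      have huniq : ∀ k ∈ J, ∀ k' ∈ J, 0 < t k → 0 < t k' → ¬ k < k' := by
        intro k hk k' hk' h h' hlt'
        obtain ⟨⟨j₁, hj₁, hk₁, hy₁⟩, -⟩ := hcase k hk h
        obtain ⟨-, ⟨j₂, hj₂, hk₂, hy₂⟩⟩ := hcase k' hk' h'
        have : j₁ < j₂ := hlt j₁ hj₁ j₂ hj₂ (by rw [hk₁, hk₂]; exact hlt')
        have : (j₁ : ℝ) < j₂ := by exact_mod_cast this
        nlinarith
      by_cases hex : ∃ k ∈ J, 0 < t k
      · obtain ⟨k, hk, hpos⟩ := hex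
        rw [← Finset.add_sum_erase J t hk]
        have : ∑ k' ∈ J.erase k, t k' ≤ 0 := by
          apply Finset.sum_nonpos
          intro k' hk'
          obtain ⟨h1, h2⟩ := Finset.mem_erase.1 hk'
          by_contra hcon
          rw [not_le] at hcon
          rcases lt_or_gt_of_ne h1 with h | h
          · exact huniq k' h2 k hk hcon hpos h
          · exact huniq k hk k' h2 hpos hcon h
        linarith [hle k hk hpos]
      · push Not at hex
        exact (Finset.sum_nonpos hex).trans hε

lemma sinh_diff {t h : ℝ} (h0 : 0 ≤ h) (h1 : h ≤ 1) : sinh (t + h) - sinh t ≤ 2 * h * cosh t ∧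
    sinh t - sinh (t - h) ≤ 2 * h * cosh t := by
  have hc : 1 ≤ cosh h := one_le_cosh h
  have hs : |sinh t| ≤ cosh t := by
    rw [← sqrt_sq (cosh_pos t).le, ← sqrt_sq_eq_abs]
    apply sqrt_le_sqrt
    have := cosh_sq t
    linarith
  have he : exp h - 1 ≤ 2 * h := by
    have := abs_exp_sub_one_le (x := h) (by rw [abs_of_nonneg h0]; exact h1)
    rw [abs_of_nonneg h0] at this
    exact (le_abs_self _).trans this
  have hch : cosh h + sinh h = exp h := cosh_add_sinh h
  have hct := cosh_pos t
  rw [sinh_add, sinh_sub]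
  have h5 := abs_le.1 hs
  have key : (cosh h - 1) * cosh t + sinh h * cosh t ≤ 2 * h * cosh t := by nlinarith
  constructor
  · nlinarith
  · nlinarith

lemma arsinh_diff {p q s τ : ℝ} (hq : q ≤ s) (hp : s ≤ p) (hτ : τ ≤ 1)
    (h : arsinh p - arsinh q ≤ τ) : p - q ≤ 2 * τ * (1 + |s|) := by
  have h1 : arsinh s ≤ arsinh p := arsinh_le_arsinh.2 hp
  have h2 : arsinh q ≤ arsinh s := arsinh_le_arsinh.2 hq
  have a1 := (sinh_diff (t := arsinh s) (h := arsinh p - arsinh s) (by linarith) (by linarith)).1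
  have a2 := (sinh_diff (t := arsinh s) (h := arsinh s - arsinh q) (by linarith) (by linarith)).2
  rw [add_sub_cancel, sinh_arsinh, sinh_arsinh] at a1
  rw [sub_sub_cancel, sinh_arsinh, sinh_arsinh] at a2
  have hc : cosh (arsinh s) ≤ 1 + |s| := by
    rw [cosh_arsinh]
    rw [sqrt_le_left (by positivity)]
    nlinarith [abs_nonneg s, sq_abs s]
  have hc0 := cosh_pos (arsinh s)
  nlinarith

lemma tv_bound (s U : ℕ → ℝ) (hs : Antitone s) {δ : ℝ}
    (hU : ∀ j, U (j + 1) = U j + δ * s j) (ja k : ℕ) (W : ℝ) (hW : ∀ j, U j ≤ W) :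
    ∑ i ∈ Finset.Ico ja (ja + k), δ * |s i| ≤ 2 * W - U ja - U (ja + k) := by
  suffices h : ∑ i ∈ Finset.Ico ja (ja + k), δ * |s i| ≤ 2 * W - U ja - U (ja + k) ∧
      (0 ≤ s (ja + k) → ∑ i ∈ Finset.Ico ja (ja + k), δ * |s i| = U (ja + k) - U ja) from h.1
  induction k with
  | zero => 
    have := hW ja
    simp; linarith
  | succ k ih =>
    obtain ⟨ih1, ih2⟩ := ih
    rw [← add_assoc, Finset.sum_Ico_succ_top (by omega), hU]
    rcases le_or_gt 0 (s (ja + k)) with h | h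
    · have e := ih2 h
      rw [abs_of_nonneg h]
      have := hW (ja + k + 1)
      rw [hU] at this
      constructor
      · linarith
      · intro; linarith
    · rw [abs_of_neg h]
      constructor
      · linarith
      · intro h'
        have := hs (Nat.le_succ (ja + k))
        have h2 : 0 ≤ s (ja + k + 1) := h'
        simp only [Nat.succ_eq_add_one] at this
        linarith

lemma line_sum (s U : ℕ → ℝ) {δ : ℝ} (hU : ∀ j, U (j + 1) = U j + δ * s j) (ja k : ℕ) (hk : ja ≤ k)
    (y : ℝ) :
    ∑ j ∈ Finset.Ioc ja k, (s (j - 1) - s j) * (y - j * δ) =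
      (U ja + s ja * (y - ja * δ)) - (U k + s k * (y - k * δ)) := by
  induction k, hk using Nat.le_induction with
  | base => simp
  | succ k hk ih =>
    rw [← Finset.insert_Ioc_right_eq_Ioc_add_one (by omega : ja ≤ k), Finset.sum_insert (by simp), ih, hU]
    simp only [Nat.add_sub_cancel]
    push_cast; ring

lemma discrete (s U : ℕ → ℝ) (hs : Antitone s) {δ G m V : ℝ} (hδ : 0 < δ)
    (hU : ∀ j, U (j + 1) = U j + δ * s j) (hG : ∀ j, |s j| ≤ G) {ja jb : ℕ} (hab : ja < jb)
    (hm : 2 ≤ m) (hV : ∑ i ∈ Finset.Ico ja jb, δ * (1 + |s i|) ≤ V) :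
    ∃ (N : ℕ) (Z D : Fin N → ℝ), (N : ℝ) ≤ m * (4 * arsinh G + V) + 1 ∧ StrictMono Z ∧
      (∀ i j, i ≠ j → δ ≤ |Z i - Z j|) ∧
      (∀ i, ((ja + 1 : ℕ) : ℝ) * δ ≤ Z i ∧ Z i ≤ ((jb - 1 : ℕ) : ℝ) * δ) ∧ (∀ i, 0 < D i) ∧
      ∑ i, D i = s ja - s (jb - 1) ∧
      (∀ y ≤ ((ja + 1 : ℕ) : ℝ) * δ, ∑ i, D i * max (y - Z i) 0 = 0) ∧
      (∀ y ≥ ((jb - 1 : ℕ) : ℝ) * δ, U ja + s ja * (y - ja * δ) - ∑ i, D i * max (y - Z i) 0 =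
        U (jb - 1) + s (jb - 1) * (y - (jb - 1 : ℕ) * δ)) ∧
      ∀ k, ja ≤ k → k < jb → ∀ y, k * δ ≤ y → y ≤ ((k + 1 : ℕ) : ℝ) * δ →
        U k + s k * (y - k * δ) ≤ U ja + s ja * (y - ja * δ) - ∑ i, D i * max (y - Z i) 0 ∧
        U ja + s ja * (y - ja * δ) - ∑ i, D i * max (y - Z i) 0 ≤
          U k + s k * (y - k * δ) + 4 / m ^ 2 := by
  have hm0 : 0 < m := by linarith
  set I := Finset.Ioo ja jb with hI
  have hIoc : I = Finset.Ioc ja (jb - 1) := by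
    ext j; simp [hI]; omega
  set d : ℕ → ℝ := fun j => s (j - 1) - s j with hd
  have hd0 : ∀ j, 0 ≤ d j := fun j => sub_nonneg.2 (hs (Nat.sub_le j 1))
  set pos : ℕ → ℝ := fun j => ∑ i ∈ Finset.Ico ja j, δ * (1 + |s i|) with hpos
  have hterm : ∀ i, 0 ≤ δ * (1 + |s i|) := fun i => by positivity
  have hposmono : ∀ a b, a ≤ b → pos a ≤ pos b := fun a b h =>
    Finset.sum_le_sum_of_subset_of_nonneg (Finset.Ico_subset_Ico_right h) (fun i _ _ => hterm i)
  have hposdiff : ∀ a b, ja ≤ a → a ≤ b → pos b - pos a = ∑ i ∈ Finset.Ico a b, δ * (1 + |s i|) := by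
    intro a b h1 h2
    simp only [hpos]
    rw [← Finset.sum_Ico_consecutive _ h1 h2]; ring
  have hθ : ∀ j, arsinh (s j) ≤ arsinh G := fun j => arsinh_le_arsinh.2 (abs_le.1 (hG j)).2
  have hθ' : ∀ j, -arsinh G ≤ arsinh (s j) := fun j => by
    rw [← arsinh_neg]; exact arsinh_le_arsinh.2 (abs_le.1 (hG j)).1
  set Ψ : ℕ → ℝ := fun j => m * (2 * arsinh G - arsinh (s (j - 1)) - arsinh (s j) + pos j) with hΨ
  have hpos0 : ∀ j, 0 ≤ pos j := fun j => Finset.sum_nonneg fun i _ => hterm i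
  have hΨ0 : ∀ j, 0 ≤ Ψ j := fun j => mul_nonneg hm0.le (by linarith [hθ j, hθ (j - 1), hpos0 j])
  have hθa : ∀ a b, a ≤ b → arsinh (s b) ≤ arsinh (s a) := fun a b h => arsinh_le_arsinh.2 (hs h)
  have hΨmono : ∀ a b, a ≤ b → Ψ a ≤ Ψ b := fun a b h =>
    mul_le_mul_of_nonneg_left (by linarith [hθa a b h, hθa (a - 1) (b - 1) (by omega), hposmono a b h]) hm0.le
  have hΨle : ∀ j ∈ I, Ψ j ≤ m * (4 * arsinh G + V) := fun j hj =>
    mul_le_mul_of_nonneg_left (by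
      have := hposmono j jb (by simp [hI] at hj; omega)
      have h2 : pos jb ≤ V := hV
      linarith [hθ' j, hθ' (j - 1)]) hm0.le
  have hG0 : 0 ≤ G := (abs_nonneg _).trans (hG 0)
  have hAG : 0 ≤ arsinh G := arsinh_nonneg_iff.2 hG0
  have hV0 : 0 ≤ V := (hpos0 jb).trans hV
  have hdsum : ∀ a b, 1 ≤ a → a ≤ b → ∑ j ∈ Finset.Icc a b, d j = s (a - 1) - s b := by
    intro a b h1 h2
    induction b, h2 using Nat.le_induction with
    | base => simp [hd]
    | succ b hb ih =>
      rw [← Finset.insert_Icc_right_eq_Icc_add_one (by omega), Finset.sum_insert (by simp), ih]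
      simp only [hd, Nat.add_sub_cancel]; ring
  obtain ⟨N, Z, D, hN, hZm, hsep, hZb, hDpos, hDs, hDZ, hP⟩ := cluster I d δ (4 / m ^ 2)
    (((ja + 1 : ℕ) : ℝ) * δ) (((jb - 1 : ℕ) : ℝ) * δ) (fun j => ⌊Ψ j⌋₊)
    (⌊m * (4 * arsinh G + V)⌋₊ + 1) hδ (by positivity) (fun j _ => hd0 j)
    (fun a _ b _ h => Nat.floor_mono (hΨmono a b h))
    (fun j hj => Nat.lt_succ_of_le (Nat.floor_mono (hΨle j hj)))
    (fun j hj => by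
      have : ja + 1 ≤ j := by simp [hI] at hj; omega
      exact mul_le_mul_of_nonneg_right (by exact_mod_cast this) hδ.le)
    (fun j hj => by
      have : j ≤ jb - 1 := by simp [hI] at hj; omega
      exact mul_le_mul_of_nonneg_right (by exact_mod_cast this) hδ.le)
    (by
      intro a ha b hb hab' hκ
      simp only [hI, Finset.mem_Ioo] at ha hb
      have hfil : I.filter (fun j => a ≤ j ∧ j ≤ b) = Finset.Icc a b := by
        ext j; simp [hI]; omega
      rw [hfil, hdsum a b (by omega) hab']
      rcases eq_or_lt_of_le hab' with h | h
      · rw [h]; simp; positivity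
      have h1 : Ψ b < Ψ a + 1 := by
        calc Ψ b < ⌊Ψ b⌋₊ + 1 := Nat.lt_floor_add_one _
          _ = ⌊Ψ a⌋₊ + 1 := by rw [show ⌊Ψ a⌋₊ = ⌊Ψ b⌋₊ from hκ]
          _ ≤ _ := by linarith [Nat.floor_le (hΨ0 a)]
      have h2 : (2 * arsinh G - arsinh (s (b - 1)) - arsinh (s b) + pos b) <
          (2 * arsinh G - arsinh (s (a - 1)) - arsinh (s a) + pos a) + 1 / m := by
        have : m * (2 * arsinh G - arsinh (s (b - 1)) - arsinh (s b) + pos b) <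
          m * ((2 * arsinh G - arsinh (s (a - 1)) - arsinh (s a) + pos a) + 1 / m) := by
          rw [mul_add m _ (1 / m), mul_one_div_cancel hm0.ne']; exact h1
        exact lt_of_mul_lt_mul_left this hm0.le
      have h3 := hθa a b hab'
      have h4 := hθa (a - 1) (b - 1) (by omega)
      have h5 := hposmono a b hab'
      have h6 := hθa a (b - 1) (by omega)
      have h7 : arsinh (s (a - 1)) - arsinh (s b) ≤ 2 / m := by
        have : 2 / m = 1 / m + 1 / m := by ring
        linarith
      have h8 : pos b - pos a ≤ 1 / m := by linarith
      rw [hposdiff a b (by omega) hab'] at h8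
      have h2m : 2 / m ≤ 1 := by rw [div_le_one hm0]; exact hm
      calc ((b : ℝ) - a) * δ * (s (a - 1) - s b)
          = ∑ i ∈ Finset.Ico a b, δ * (s (a - 1) - s b) := by
            rw [Finset.sum_const, Nat.card_Ico, nsmul_eq_mul, Nat.cast_sub hab']; ring
        _ ≤ ∑ i ∈ Finset.Ico a b, (4 / m) * (δ * (1 + |s i|)) := by
            apply Finset.sum_le_sum
            intro i hi
            simp only [Finset.mem_Ico] at hi
            have := arsinh_diff (hs (by omega : i ≤ b)) (hs (by omega : a - 1 ≤ i)) h2m h7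
            calc _ ≤ δ * (2 * (2 / m) * (1 + |s i|)) := mul_le_mul_of_nonneg_left this hδ.le
              _ = _ := by ring
        _ ≤ (4 / m) * (1 / m) := by
            rw [← Finset.mul_sum]
            exact mul_le_mul_of_nonneg_left h8 (by positivity)
        _ = 4 / m ^ 2 := by field_simp)
  have hDs' : ∑ j ∈ I, d j = s ja - s (jb - 1) := by
    rcases Nat.lt_or_ge (ja + 1) jb with h | h
    · have : I = Finset.Icc (ja + 1) (jb - 1) := by ext j; simp [hI]; omega
      rw [this, hdsum _ _ (by omega) (by omega)]; simp
    · have h1 : jb - 1 = ja := by omega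
      have : I = ∅ := by ext j; simp [hI]; omega
      rw [this, h1]; simp
  refine ⟨N, Z, D, ?_, hZm, hsep, hZb, hDpos, hDs.trans hDs', ?_, ?_, ?_⟩
  · have h1 : (N : ℝ) ≤ (⌊m * (4 * arsinh G + V)⌋₊ + 1 : ℕ) := by exact_mod_cast hN
    push_cast at h1
    have := Nat.floor_le (a := m * (4 * arsinh G + V)) (by positivity)
    linarith
  · intro y hy
    apply Finset.sum_eq_zero
    intro i _
    rw [max_eq_right (by linarith [(hZb i).1]), mul_zero]
  · intro y hy
    have h1 : ∑ i, D i * max (y - Z i) 0 = ∑ j ∈ I, d j * (y - j * δ) := by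
      calc _ = ∑ i, D i * (y - Z i) := by
            apply Finset.sum_congr rfl
            intro i _
            rw [max_eq_left (by linarith [(hZb i).2])]
        _ = _ := by
          simp only [mul_sub, Finset.sum_sub_distrib, ← Finset.sum_mul]
          rw [hDs, hDZ]
    rw [h1, hIoc, line_sum s U hU ja (jb - 1) (by omega) y]
    ring
  · intro k hk hkb y hy1 hy2
    have h1 : ∑ j ∈ I, d j * max (y - j * δ) 0 = ∑ j ∈ Finset.Ioc ja k, d j * (y - j * δ) := by
      have hsub : Finset.Ioc ja k ⊆ I := by
        intro j; simp [hI]; omega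
      rw [← Finset.sum_subset hsub]
      · apply Finset.sum_congr rfl
        intro j hj
        have : (j : ℝ) ≤ k := by exact_mod_cast (Finset.mem_Ioc.1 hj).2
        rw [max_eq_left (by nlinarith)]
      · intro j hj hj'
        have : k + 1 ≤ j := by simp [hI] at hj hj'; omega
        have : ((k + 1 : ℕ) : ℝ) ≤ j := by exact_mod_cast this
        rw [max_eq_right (by nlinarith), mul_zero]
    have h2 := line_sum s U hU ja k hk y
    obtain ⟨h3, h4⟩ := hP y
    rw [h1, h2] at h3 h4
    constructor <;> linarith

lemma three_pt {u : ℝ → ℝ} (hu : ConcaveOn ℝ univ u) {x y z : ℝ} (hxy : x ≤ y) (hyz : y ≤ z) :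
    (z - y) * u x + (y - x) * u z ≤ (z - x) * u y := by
  rcases eq_or_lt_of_le (hxy.trans hyz) with h | h
  · have h1 : x = y := by linarith
    have h2 : z = y := by linarith
    subst h1; subst h2; simp
  have hzx : 0 < z - x := by linarith
  have ha : 0 ≤ (z - y) / (z - x) := div_nonneg (by linarith) hzx.le
  have hb : 0 ≤ (y - x) / (z - x) := div_nonneg (by linarith) hzx.le
  have hab : (z - y) / (z - x) + (y - x) / (z - x) = 1 := by field_simp; ring
  have := hu.2 (mem_univ x) (mem_univ z) ha hb hab
  simp only [smul_eq_mul] at this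
  have e : (z - y) / (z - x) * x + (y - x) / (z - x) * z = y := by field_simp; ring
  rw [e] at this
  have h2 := mul_le_mul_of_nonneg_left this hzx.le
  have e2 : (z - x) * ((z - y) / (z - x) * u x + (y - x) / (z - x) * u z) =
    (z - y) * u x + (y - x) * u z := by field_simp
  linarith

set_option maxHeartbeats 2000000 in
lemma approx {u : ℝ → ℝ} (hu : ConcaveOn ℝ univ u) {α β G A δ m H h₀ xs : ℝ} (hα : 0 < α)
    (hlip : ∀ x y, u x ≤ u y + G * |x - y|) (henv : ∀ x, u x ≤ β - α * |x|)
    (hδ : 0 < δ) (hGδ : G * δ ≤ 1) (hm : 2 ≤ m) (hxs : -h₀ ≤ u xs) (hAxs : A ≤ xs)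
    (hA : u A < -H) (hH : h₀ + 2 < H) (hR : 0 < β + H) :
    ∃ (N : ℕ) (Z D : Fin N → ℝ) (a b L₀ s₁ s₂ : ℝ),
      (N : ℝ) ≤ m * (4 * arsinh G + (2 * ((β + H) / α) + 2 * β + 2 * H)) + 1 ∧ StrictMono Z ∧
      (∀ i j, i ≠ j → δ ≤ |Z i - Z j|) ∧ (∀ i, 0 < Z i ∧ A + Z i ≤ (β + H) / α) ∧
      (∀ i, 0 < D i) ∧ ∑ i, D i = s₁ - s₂ ∧
      H - h₀ - 2 ≤ s₁ * (2 * ((β + H) / α)) ∧ s₁ ≤ G ∧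
      H - h₀ - 2 ≤ (-s₂) * (2 * ((β + H) / α)) ∧ -G ≤ s₂ ∧
      (∀ x, u x - 2 * (G * δ) ≤ L₀ + s₁ * (x - A) - ∑ i, D i * max (x - A - Z i) 0) ∧
      (∀ x, L₀ + s₁ * (x - A) - ∑ i, D i * max (x - A - Z i) 0 ≤ u x + 4 / m ^ 2 ∨
        L₀ + s₁ * (x - A) - ∑ i, D i * max (x - A - Z i) 0 ≤ 1 - H - s₁ * |x - a| ∨
        L₀ + s₁ * (x - A) - ∑ i, D i * max (x - A - Z i) 0 ≤ 1 - H - (-s₂) * |x - b|) := by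
  set R := (β + H) / α with hRdef
  have hR0 : 0 < R := div_pos hR hα
  set U : ℕ → ℝ := fun j => u (A + j * δ) with hUdef
  set s : ℕ → ℝ := fun j => (U (j + 1) - U j) / δ with hsdef
  have hU : ∀ j, U (j + 1) = U j + δ * s j := fun j => by
    simp only [hsdef]; field_simp; ring
  have hxsucc : ∀ j : ℕ, A + ((j + 1 : ℕ) : ℝ) * δ = A + j * δ + δ := fun j => by push_cast; ring
  have hG0 : 0 ≤ G := by
    have h1 := hlip 0 1
    have h2 := hlip 1 0
    simp at h1 h2
    linarith
  have hlipU : ∀ j, |U (j + 1) - U j| ≤ G * δ := by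
    intro j
    have h1 := hlip (A + ((j + 1 : ℕ) : ℝ) * δ) (A + j * δ)
    have h2 := hlip (A + j * δ) (A + ((j + 1 : ℕ) : ℝ) * δ)
    have e1 : |A + ((j + 1 : ℕ) : ℝ) * δ - (A + j * δ)| = δ := by
      rw [hxsucc, add_sub_cancel_left, abs_of_pos hδ]
    rw [abs_sub_comm, e1] at h2
    rw [e1] at h1
    rw [abs_le]
    simp only [hUdef]
    constructor <;> linarith
  have hsG : ∀ j, |s j| ≤ G := fun j => by
    simp only [hsdef]
    rw [abs_div, abs_of_pos hδ, div_le_iff₀ hδ]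
    exact hlipU j
  have hs : Antitone s := by
    apply antitone_nat_of_succ_le
    intro j
    simp only [hsdef]
    apply div_le_div_of_nonneg_right _ hδ.le
    have := three_pt hu (x := A + j * δ) (y := A + ((j + 1 : ℕ) : ℝ) * δ) (z := A + ((j + 1 + 1 : ℕ) : ℝ) * δ)
      (by rw [hxsucc]; linarith) (by rw [hxsucc (j + 1)]; linarith)
    have e1 : A + ((j + 1 + 1 : ℕ) : ℝ) * δ - (A + ((j + 1 : ℕ) : ℝ) * δ) = δ := by rw [hxsucc (j + 1)]; ring
    have e2 : A + ((j + 1 : ℕ) : ℝ) * δ - (A + j * δ) = δ := by rw [hxsucc]; ring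
    have e3 : A + ((j + 1 + 1 : ℕ) : ℝ) * δ - (A + j * δ) = 2 * δ := by rw [hxsucc (j + 1), hxsucc]; ring
    rw [e1, e2, e3] at this
    have h2 : δ * (U j + U (j + 1 + 1)) ≤ δ * (2 * U (j + 1)) := by
      simp only [hUdef]; linarith
    have := le_of_mul_le_mul_left h2 hδ
    linarith
  -- the chord extension lies above outside the cell
  have hUs : ∀ j : ℕ, u (A + j * δ + δ) = U j + δ * s j := fun j => by
    rw [← hU, ← hxsucc]
  have hout : ∀ (j : ℕ) x, x ≤ A + j * δ ∨ A + j * δ + δ ≤ x → u x ≤ U j + s j * (x - A - j * δ) := by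
    intro j x hx
    rcases hx with hx | hx
    · have := three_pt hu (x := x) (y := A + j * δ) (z := A + j * δ + δ) hx (by linarith)
      rw [hUs] at this
      have h2 : δ * u x ≤ δ * (U j + s j * (x - A - j * δ)) := by
        have e : u (A + j * δ) = U j := rfl
        rw [e] at this
        nlinarith
      exact le_of_mul_le_mul_left h2 hδ
    · have := three_pt hu (x := A + j * δ) (y := A + j * δ + δ) (z := x) (by linarith) hx
      rw [hUs] at this
      have h2 : δ * u x ≤ δ * (U j + s j * (x - A - j * δ)) := by
        have e : u (A + j * δ) = U j := rfl
        rw [e] at this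
        nlinarith
      exact le_of_mul_le_mul_left h2 hδ
  have hin : ∀ (j : ℕ) x, A + j * δ ≤ x → x ≤ A + j * δ + δ → U j + s j * (x - A - j * δ) ≤ u x := by
    intro j x h1 h2
    have := three_pt hu h1 h2
    rw [hUs] at this
    have h3 : δ * (U j + s j * (x - A - j * δ)) ≤ δ * u x := by
      have e : u (A + j * δ) = U j := rfl
      rw [e] at this
      nlinarith
    exact le_of_mul_le_mul_left h3 hδ
  have hcore : ∀ x, -H ≤ u x → |x| ≤ R := by
    intro x hx
    rw [hRdef, le_div_iff₀ hα]
    linarith [henv x]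
  -- the peak index
  set k := ⌊(xs - A) / δ⌋₊ with hk
  have hk1 : A + k * δ ≤ xs := by
    have := Nat.floor_le (a := (xs - A) / δ) (div_nonneg (by linarith) hδ.le)
    rw [← hk, le_div_iff₀ hδ] at this
    linarith
  have hk2 : xs ≤ A + k * δ + δ := by
    have := Nat.lt_floor_add_one ((xs - A) / δ)
    rw [← hk, div_lt_iff₀ hδ] at this
    linarith
  have hUk : -h₀ - 1 ≤ U k := by
    have := hlip xs (A + k * δ)
    rw [abs_of_nonneg (by linarith)] at this
    have h2 : G * (xs - (A + k * δ)) ≤ G * δ := mul_le_mul_of_nonneg_left (by linarith) hG0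
    simp only [hUdef]
    linarith
  have hexa : ∃ j, -H ≤ U j := ⟨k, by linarith⟩
  obtain ⟨ja, hja1, hja2⟩ : ∃ ja, -H ≤ U ja ∧ ∀ j < ja, U j < -H :=
    ⟨Nat.find hexa, Nat.find_spec hexa, fun j hj => not_le.1 (Nat.find_min hexa hj)⟩
  have hjak : ja ≤ k := by
    by_contra h
    have := hja2 k (not_le.1 h)
    linarith
  have hja0 : ja ≠ 0 := by
    intro h
    rw [h] at hja1
    simp [hUdef] at hja1
    linarith
  have hUja : U ja ≤ 1 - H := by
    have h1 := hja2 (ja - 1) (by omega)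
    have h2 := hlipU (ja - 1)
    rw [Nat.sub_add_cancel (by omega)] at h2
    have := (abs_le.1 h2).2
    linarith
  have hexb : ∃ j, k ≤ j ∧ U (j + 1) < -H := by
    obtain ⟨j, hj⟩ := exists_nat_gt ((R - A) / δ)
    rw [div_lt_iff₀ hδ] at hj
    refine ⟨k + j, by omega, ?_⟩
    by_contra hcon
    have h1 := hcore _ (not_lt.1 hcon)
    have h2 := (le_abs_self _).trans h1
    push_cast at h2
    nlinarith [mul_nonneg (Nat.cast_nonneg (α := ℝ) k) hδ.le]
  obtain ⟨jb, ⟨hkjb, hjb1⟩, hjb2⟩ : ∃ jb, (k ≤ jb ∧ U (jb + 1) < -H) ∧ ∀ j < jb, ¬ (k ≤ j ∧ U (j + 1) < -H) :=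
    ⟨Nat.find hexb, Nat.find_spec hexb, fun j hj => Nat.find_min hexb hj⟩
  have hUjb' : -H ≤ U jb := by
    rcases eq_or_lt_of_le hkjb with h | h
    · rw [← h]; linarith
    · have := hjb2 (jb - 1) (by omega)
      rw [Nat.sub_add_cancel (by omega)] at this
      push Not at this
      exact this (by omega)
  have hUjb : U jb ≤ 1 - H := by
    have := (abs_le.1 (hlipU jb)).1
    linarith
  have hjak' : ja < k := by
    rcases eq_or_lt_of_le hjak with h | h
    · rw [h] at hUja; linarith
    · exact h
  have hkjb' : k < jb := by
    rcases eq_or_lt_of_le hkjb with h | h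
    · rw [← h] at hUjb; linarith
    · exact h
  have hxa := hcore _ hja1
  have hxb := hcore _ hUjb'
  have hxk := hcore (A + k * δ) (by change -H ≤ U k; linarith)
  rw [abs_le] at hxa hxb hxk
  have hjbs : (((jb - 1 : ℕ) : ℝ)) = jb - 1 := by rw [Nat.cast_sub (by omega)]; simp
  have hUb : U jb = U (jb - 1) + δ * s (jb - 1) := by
    have := hU (jb - 1)
    rwa [Nat.sub_add_cancel (by omega)] at this
  -- slopes
  have hs1 : H - h₀ - 2 ≤ s ja * (2 * R) := by
    have h1 := hout ja (A + k * δ) (Or.inr (by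
      have : ((ja + 1 : ℕ) : ℝ) ≤ k := by exact_mod_cast hjak'
      push_cast at this
      nlinarith))
    have e : u (A + k * δ) = U k := rfl
    rw [e] at h1
    set w := A + k * δ - A - ja * δ with hw
    have hw0 : 0 < w := by
      have : (ja : ℝ) < k := by exact_mod_cast hjak'
      rw [hw]; nlinarith
    have hw2 : w ≤ 2 * R := by rw [hw]; linarith
    have h3 : 0 < s ja * w := by linarith
    have h4 : 0 < s ja := (pos_iff_pos_of_mul_pos h3).2 hw0
    nlinarith
  have hs2 : H - h₀ - 2 ≤ (-s (jb - 1)) * (2 * R) := by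
    have h1 := hout (jb - 1) (A + k * δ) (Or.inl (by
      have : (k : ℝ) ≤ ((jb - 1 : ℕ) : ℝ) := by exact_mod_cast (by omega : k ≤ jb - 1)
      nlinarith))
    have e : u (A + k * δ) = U k := rfl
    rw [e, hjbs] at h1
    set w := jb * δ - k * δ with hw
    have hw0 : 0 < w := by
      have : (k : ℝ) < jb := by exact_mod_cast hkjb'
      rw [hw]; nlinarith
    have hw2 : w ≤ 2 * R := by rw [hw]; linarith
    have h2 : U k ≤ U jb - s (jb - 1) * w := by rw [hUb, hw]; linarith
    have h3 : 0 < (-s (jb - 1)) * w := by linarith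
    have h4 : 0 < -s (jb - 1) := (pos_iff_pos_of_mul_pos h3).2 hw0
    nlinarith
  have hVb : ∑ i ∈ Finset.Ico ja jb, δ * (1 + |s i|) ≤ 2 * R + 2 * β + 2 * H := by
    have h1 := tv_bound s U hs hU ja (jb - ja) β (fun j => by
      have := henv (A + j * δ)
      have h2 := mul_nonneg hα.le (abs_nonneg (A + j * δ))
      simp only [hUdef]; linarith)
    rw [Nat.add_sub_cancel' (by omega : ja ≤ jb)] at h1
    simp only [mul_add, mul_one, Finset.sum_add_distrib, Finset.sum_const, Nat.card_Ico, nsmul_eq_mul]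
    rw [Nat.cast_sub (by omega)]
    linarith
  obtain ⟨N, Z, D, hN, hZm, hsep, hZb, hDpos, hDs, hleft, hright, hmid⟩ :=
    discrete s U hs hδ hU hsG (by omega : ja < jb) hm hVb
  refine ⟨N, Z, D, A + ja * δ, A + jb * δ, U ja - s ja * (ja * δ), s ja, s (jb - 1), hN, hZm, hsep,
    ?_, hDpos, hDs, hs1, (abs_le.1 (hsG _)).2, hs2, (abs_le.1 (hsG _)).1, ?_, ?_⟩
  · intro i
    obtain ⟨h1, h2⟩ := hZb i
    constructor
    · have : 0 < ((ja + 1 : ℕ) : ℝ) * δ := by positivity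
      linarith
    · rw [hjbs] at h2
      nlinarith
  · intro x
    have eφ : U ja - s ja * (ja * δ) + s ja * (x - A) = U ja + s ja * (x - A - ja * δ) := by ring
    rw [eφ]
    have hGδ0 : 0 ≤ G * δ := mul_nonneg hG0 hδ.le
    rcases le_or_gt x (A + ja * δ) with h | h
    · rw [hleft (x - A) (by push_cast; nlinarith)]
      have := hout ja x (Or.inl h)
      linarith
    rcases le_or_gt (A + jb * δ) x with h' | h'
    · rw [hright (x - A) (by rw [hjbs]; nlinarith)]
      have := hout (jb - 1) x (Or.inr (by rw [hjbs]; nlinarith))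
      linarith
    · set i := ⌊(x - A) / δ⌋₊ with hi
      have hxA : 0 ≤ x - A := by
        have : 0 ≤ (ja : ℝ) * δ := by positivity
        linarith
      have hi1 : i * δ ≤ x - A := by
        have := Nat.floor_le (a := (x - A) / δ) (div_nonneg hxA hδ.le)
        rwa [← hi, le_div_iff₀ hδ] at this
      have hi2 : x - A < (i + 1) * δ := by
        have := Nat.lt_floor_add_one ((x - A) / δ)
        rwa [← hi, div_lt_iff₀ hδ] at this
      have hi3 : ja ≤ i := Nat.le_floor (by rw [le_div_iff₀ hδ]; linarith)
      have hi4 : i < jb := by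
        have : (i : ℝ) < jb := by
          by_contra hcon
          have := not_lt.1 hcon
          nlinarith
        exact_mod_cast this
      have h1 := (hmid i hi3 hi4 (x - A) hi1 (by push_cast; exact hi2.le)).1
      have h2 := hlip x (A + i * δ)
      rw [abs_of_nonneg (by linarith)] at h2
      have h3 : G * (x - (A + i * δ)) ≤ G * δ := mul_le_mul_of_nonneg_left (by linarith) hG0
      have h4 := (abs_le.1 (hsG i)).1
      have h5 : -G * (x - A - i * δ) ≤ s i * (x - A - i * δ) := mul_le_mul_of_nonneg_right h4 (by linarith)
      have e : u (A + i * δ) = U i := rfl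
      rw [e] at h2
      linarith
  · intro x
    have eφ : U ja - s ja * (ja * δ) + s ja * (x - A) = U ja + s ja * (x - A - ja * δ) := by ring
    rw [eφ]
    rcases le_or_gt x (A + ja * δ) with h | h
    · right; left
      rw [hleft (x - A) (by push_cast; nlinarith), abs_of_nonpos (by linarith)]
      linarith
    rcases le_or_gt (A + jb * δ) x with h' | h'
    · right; right
      rw [hright (x - A) (by rw [hjbs]; nlinarith), abs_of_nonneg (by linarith), hjbs]
      linarith
    · left
      set i := ⌊(x - A) / δ⌋₊ with hi
      have hxA : 0 ≤ x - A := by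
        have : 0 ≤ (ja : ℝ) * δ := by positivity
        linarith
      have hi1 : i * δ ≤ x - A := by
        have := Nat.floor_le (a := (x - A) / δ) (div_nonneg hxA hδ.le)
        rwa [← hi, le_div_iff₀ hδ] at this
      have hi2 : x - A < (i + 1) * δ := by
        have := Nat.lt_floor_add_one ((x - A) / δ)
        rwa [← hi, div_lt_iff₀ hδ] at this
      have hi3 : ja ≤ i := Nat.le_floor (by rw [le_div_iff₀ hδ]; linarith)
      have hi4 : i < jb := by
        have : (i : ℝ) < jb := by
          by_contra hcon
          have := not_lt.1 hcon
          nlinarith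
        exact_mod_cast this
      have h1 := (hmid i hi3 hi4 (x - A) hi1 (by push_cast; exact hi2.le)).2
      have h2 := hin i x (by linarith) (by linarith)
      linarith

lemma exp_close {p q ε : ℝ} (hε1 : ε ≤ 1) (h : |p - q| ≤ ε) :
    |exp p - exp q| ≤ exp q * (2 * ε) := by
  have h1 := abs_exp_sub_one_le (x := p - q) (h.trans hε1)
  have e : exp p - exp q = exp q * (exp (p - q) - 1) := by
    rw [mul_sub, ← exp_add]; simp
  rw [e, abs_mul, abs_of_pos (exp_pos _)]
  apply mul_le_mul_of_nonneg_left _ (exp_pos _).le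
  linarith

lemma sqrt_sub_sq_le_max {x y T : ℝ} (hx : 0 ≤ x) (hy : 0 ≤ y) (hxT : x ≤ T) (hyT : y ≤ T) :
    (√x - √y) ^ 2 ≤ T := by
  have h1 := sq_sqrt hx
  have h2 := sq_sqrt hy
  rcases le_total (√x) (√y) with h | h
  · nlinarith [sqrt_nonneg x, sqrt_nonneg y]
  · nlinarith [sqrt_nonneg x, sqrt_nonneg y]

lemma sqrt_sub_sq_le_sub {x y : ℝ} (hx : 0 ≤ x) (hxy : x ≤ y) :
    (√x - √y) ^ 2 ≤ y - x := by
  have h1 := sq_sqrt hx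
  have h2 := sq_sqrt (hx.trans hxy)
  nlinarith [sqrt_nonneg x, sqrt_le_sqrt hxy]

set_option maxHeartbeats 2000000 in
lemma hell {α β : ℝ} {f u φ : ℝ → ℝ} {H A B a b c ε τ₁ τ₂ : ℝ} (hα : 0 < α) (hf : IsDensityFn f)
    (hc : 0 < c) (hε0 : 0 < ε) (hε1 : ε ≤ 1) (hη : exp (-H) ≤ ε ^ 2)
    (hfu : ∀ x, f x ≤ exp (u x)) (henv : ∀ x, u x ≤ β - α * |x|)
    (hdiff : ∀ x, exp (u x) - f x ≤
        exp β * exp (-(exp H * |x - τ₁|)) + exp β * exp (-(exp H * |x - τ₂|)))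
    (hlow : ∀ x, u x - ε ≤ φ x)
    (hup : ∀ x, φ x ≤ u x + ε ∨ φ x ≤ 1 - H - c * |x - a| ∨ φ x ≤ 1 - H - c * |x - b|)
    (hφ : Continuous φ)
    (hAB : ∀ x, x ∉ Icc A B → 2 * H ≤ α * |x|)
    (hK : (8 * exp β + 4 * exp 3 / c + 8 * exp β / α) * ε ≤ 1 / 2) :
    let g := (Icc A B).indicator (fun x => exp (φ x))
    1 / 2 ≤ ∫ x, g x ∧ ∫ x, g x ≤ 2 ∧
      hellingerSq f (fun x => g x / ∫ x, g x) ≤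
        (2 * (8 * exp β + 4 * exp 3 / c + 8 * exp β / α) +
          2 * (8 * exp β + 4 * exp 3 / c + 8 * exp β / α) ^ 2) * ε ^ 2 := by
  intro g
  obtain ⟨hfm, hf0, hfI⟩ := hf
  set K := 8 * exp β + 4 * exp 3 / c + 8 * exp β / α with hKdef
  have hK0 : 0 < K := by positivity
  set T : ℝ → ℝ := fun x => exp (2 - H) * exp (-(c * |x - a|)) + exp (2 - H) * exp (-(c * |x - b|)) +
    exp (β - H) * exp (-(α / 2 * |x - 0|)) with hT
  set Q : ℝ → ℝ := fun x => exp β * exp (-(exp H * |x - τ₁|)) + exp β * exp (-(exp H * |x - τ₂|)) with hQ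
  set E : ℝ → ℝ := fun x => exp β * exp (-(α * |x - 0|)) with hE
  have hTi : Integrable T :=
    (((integrable_lap c a hc).const_mul _).add ((integrable_lap c b hc).const_mul _)).add
      ((integrable_lap (α / 2) 0 (by positivity)).const_mul _)
  have hQi : Integrable Q :=
    ((integrable_lap (exp H) τ₁ (exp_pos _)).const_mul _).add
      ((integrable_lap (exp H) τ₂ (exp_pos _)).const_mul _)
  have hEi : Integrable E := (integrable_lap α 0 hα).const_mul _
  have hTI : ∫ x, T x = exp (2 - H) * (2 / c) + exp (2 - H) * (2 / c) + exp (β - H) * (2 / (α / 2)) := by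
    simp only [hT]
    rw [integral_add, integral_add, integral_const_mul, integral_const_mul, integral_const_mul,
      integral_lap _ _ hc, integral_lap _ _ hc, integral_lap _ _ (by positivity)]
    · exact (integrable_lap c a hc).const_mul _
    · exact (integrable_lap c b hc).const_mul _
    · exact ((integrable_lap c a hc).const_mul _).add ((integrable_lap c b hc).const_mul _)
    · exact (integrable_lap (α / 2) 0 (by positivity)).const_mul _
  have hQI : ∫ x, Q x = exp β * (2 / exp H) + exp β * (2 / exp H) := by
    simp only [hQ]
    rw [integral_add, integral_const_mul, integral_const_mul, integral_lap _ _ (exp_pos _),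
      integral_lap _ _ (exp_pos _)]
    · exact (integrable_lap _ τ₁ (exp_pos _)).const_mul _
    · exact (integrable_lap _ τ₂ (exp_pos _)).const_mul _
  have hEI : ∫ x, E x = exp β * (2 / α) := by
    simp only [hE]
    rw [integral_const_mul, integral_lap _ _ hα]
  have hT0 : ∀ x, 0 ≤ T x := fun x => by positivity
  have hQ0 : ∀ x, 0 ≤ Q x := fun x => by positivity
  have hE0 : ∀ x, 0 ≤ E x := fun x => by positivity
  have huE : ∀ x, exp (u x) ≤ E x := fun x => by
    simp only [hE]
    rw [← exp_add]
    apply exp_le_exp.2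
    have := henv x
    rw [sub_zero]; linarith
  have hg0 : ∀ x, 0 ≤ g x := fun x => Set.indicator_nonneg (fun _ _ => (exp_pos _).le) x
  -- pointwise bounds
  have hpt : ∀ x, (√(f x) - √(g x)) ^ 2 ≤ 2 * Q x + 2 * ε ^ 2 * E x + T x ∧
      |g x - f x| ≤ Q x + 2 * ε * E x + T x := by
    intro x
    have q0 := hQ0 x
    have e0 : 0 ≤ ε * E x := mul_nonneg hε0.le (hE0 x)
    have e0' : 0 ≤ ε ^ 2 * E x := mul_nonneg (by positivity) (hE0 x)
    have hmaxcase : f x ≤ T x → g x ≤ T x → (√(f x) - √(g x)) ^ 2 ≤ 2 * Q x + 2 * ε ^ 2 * E x + T x ∧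
      |g x - f x| ≤ Q x + 2 * ε * E x + T x := by
      intro h1 h2
      have := sqrt_sub_sq_le_max (hf0 x) (hg0 x) h1 h2
      refine ⟨by linarith, ?_⟩
      rw [abs_le]
      constructor <;> linarith [hf0 x, hg0 x]
    by_cases hx : x ∈ Icc A B
    · have hgx : g x = exp (φ x) := Set.indicator_of_mem hx _
      rcases hup x with h | h
      · have hcl : |φ x - u x| ≤ ε := by rw [abs_le]; constructor <;> linarith [hlow x]
        constructor
        · have h1 := sqrt_sub_sq_le_sub (hf0 x) (hfu x)
          have h2 : (√(exp (u x)) - √(g x)) ^ 2 ≤ ε ^ 2 * E x := by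
            rw [hgx, ← exp_half, ← exp_half]
            have h3 := exp_close (p := φ x / 2) (q := u x / 2) (ε := ε / 2) (by linarith) (by
              rw [← sub_div, abs_div, abs_two]; linarith)
            rw [abs_sub_comm] at h3
            have h4 := pow_le_pow_left₀ (abs_nonneg _) h3 2
            rw [sq_abs] at h4
            calc _ ≤ _ := h4
              _ = ε ^ 2 * exp (u x) := by
                rw [mul_pow, ← exp_nat_mul]
                have : ((2 : ℕ) : ℝ) * (u x / 2) = u x := by push_cast; ring
                rw [this]; ring
              _ ≤ _ := mul_le_mul_of_nonneg_left (huE x) (by positivity)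
          have h5 := hdiff x
          have h6 : exp (u x) - f x ≤ Q x := h5
          nlinarith [sq_nonneg ((√(f x) - √(exp (u x))) - (√(exp (u x)) - √(g x))), hT0 x]
        · have h3 := exp_close hε1 hcl
          rw [hgx]
          have h6 : exp (u x) - f x ≤ Q x := hdiff x
          have h7 : exp (u x) * (2 * ε) ≤ E x * (2 * ε) := mul_le_mul_of_nonneg_right (huE x) (by linarith)
          have h8 := hfu x
          have h9 := hT0 x
          rw [abs_le] at h3 ⊢
          constructor <;> linarith
      · have hfφ : f x ≤ exp (1 + φ x) := (hfu x).trans (exp_le_exp.2 (by linarith [hlow x]))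
        have hgφ : g x ≤ exp (1 + φ x) := by rw [hgx]; exact exp_le_exp.2 (by linarith)
        have hφT : exp (1 + φ x) ≤ T x := by
          have p1 : 0 ≤ exp (2 - H) * exp (-(c * |x - a|)) := by positivity
          have p2 : 0 ≤ exp (2 - H) * exp (-(c * |x - b|)) := by positivity
          have p3 : 0 ≤ exp (β - H) * exp (-(α / 2 * |x - 0|)) := by positivity
          rcases h with h | h
          · have : exp (1 + φ x) ≤ exp (2 - H) * exp (-(c * |x - a|)) := by
              rw [← exp_add]; exact exp_le_exp.2 (by linarith)
            simp only [hT]; linarith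
          · have : exp (1 + φ x) ≤ exp (2 - H) * exp (-(c * |x - b|)) := by
              rw [← exp_add]; exact exp_le_exp.2 (by linarith)
            simp only [hT]; linarith
        exact hmaxcase (hfφ.trans hφT) (hgφ.trans hφT)
    · have hgx : g x = 0 := Set.indicator_of_notMem hx _
      apply hmaxcase
      · have p1 : 0 ≤ exp (2 - H) * exp (-(c * |x - a|)) := by positivity
        have p2 : 0 ≤ exp (2 - H) * exp (-(c * |x - b|)) := by positivity
        have : f x ≤ exp (β - H) * exp (-(α / 2 * |x - 0|)) := by
          rw [← exp_add]
          refine (hfu x).trans (exp_le_exp.2 ?_)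
          have h1 := hAB x hx
          have h2 := henv x
          rw [sub_zero]
          linarith
        simp only [hT]; linarith
      · rw [hgx]; exact hT0 x
  have hfi : Integrable f := by
    by_contra h
    rw [integral_undef h] at hfI
    exact zero_ne_one hfI
  have hgi : Integrable g := by
    rw [integrable_indicator_iff measurableSet_Icc]
    exact (hφ.rexp).continuousOn.integrableOn_Icc
  set Z := ∫ x, g x with hZ
  -- numeric bounds
  have hexpη : exp (2 - H) ≤ exp 3 * ε ^ 2 := by
    rw [sub_eq_add_neg, exp_add]
    have : exp 2 ≤ exp 3 := exp_le_exp.2 (by norm_num)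
    exact mul_le_mul this hη (exp_pos _).le (exp_pos _).le
  have hexpβ : exp (β - H) ≤ exp β * ε ^ 2 := by
    rw [sub_eq_add_neg, exp_add]
    exact mul_le_mul_of_nonneg_left hη (exp_pos _).le
  have hinv : 1 / exp H ≤ ε ^ 2 := by rw [one_div, ← exp_neg]; exact hη
  have hTI' : ∫ x, T x ≤ (4 * exp 3 / c + 4 * exp β / α) * ε ^ 2 := by
    rw [hTI]
    have h1 : exp (2 - H) * (2 / c) ≤ exp 3 * ε ^ 2 * (2 / c) := mul_le_mul_of_nonneg_right hexpη (by positivity)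
    have h2 : exp (β - H) * (2 / (α / 2)) ≤ exp β * ε ^ 2 * (2 / (α / 2)) :=
      mul_le_mul_of_nonneg_right hexpβ (by positivity)
    calc _ ≤ exp 3 * ε ^ 2 * (2 / c) + exp 3 * ε ^ 2 * (2 / c) + exp β * ε ^ 2 * (2 / (α / 2)) := by linarith
      _ = _ := by field_simp; ring
  have hQI' : ∫ x, Q x ≤ 4 * exp β * ε ^ 2 := by
    rw [hQI]
    have h1 : exp β * (2 / exp H) ≤ exp β * (2 * ε ^ 2) := by
      apply mul_le_mul_of_nonneg_left _ (exp_pos _).le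
      have : 2 / exp H = 2 * (1 / exp H) := by ring
      linarith
    linarith
  have hΛ : ∫ x, (2 * Q x + 2 * ε ^ 2 * E x + T x) ≤ K * ε ^ 2 := by
    rw [integral_add, integral_add, integral_const_mul, integral_const_mul, hEI]
    · have : 2 * ε ^ 2 * (exp β * (2 / α)) = 4 * exp β / α * ε ^ 2 := by ring
      rw [this, hKdef]
      have e : (8 * exp β + 4 * exp 3 / c + 8 * exp β / α) * ε ^ 2 =
        2 * (4 * exp β * ε ^ 2) + 4 * exp β / α * ε ^ 2 + (4 * exp 3 / c + 4 * exp β / α) * ε ^ 2 := by ring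
      linarith
    · exact hQi.const_mul _
    · exact hEi.const_mul _
    · exact (hQi.const_mul _).add (hEi.const_mul _)
    · exact hTi
  have hZ1 : |Z - 1| ≤ K * ε := by
    have h1 : Z - 1 = ∫ x, (g x - f x) := by rw [integral_sub hgi hfi, hfI]
    rw [h1]
    have h2 : |∫ x, (g x - f x)| ≤ ∫ x, (Q x + 2 * ε * E x + T x) := by
      have hBi' : Integrable (fun x => Q x + 2 * ε * E x + T x) :=
        (hQi.add (hEi.const_mul _)).add hTi
      have h0 := norm_integral_le_of_norm_le (f := fun x => g x - f x) hBi'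
        (Eventually.of_forall fun x => by rw [Real.norm_eq_abs]; exact (hpt x).2)
      rwa [Real.norm_eq_abs] at h0
    refine h2.trans ?_
    rw [integral_add, integral_add, integral_const_mul, hEI]
    · have hsq : ε ^ 2 ≤ ε := by nlinarith
      have e : K * ε = (8 * exp β) * ε + 4 * exp β / α * ε + (4 * exp 3 / c + 4 * exp β / α) * ε := by
        rw [hKdef]; ring
      have h3 : (4 * exp 3 / c + 4 * exp β / α) * ε ^ 2 ≤ (4 * exp 3 / c + 4 * exp β / α) * ε :=
        mul_le_mul_of_nonneg_left hsq (by positivity)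
      have h4 : 4 * exp β * ε ^ 2 ≤ 8 * exp β * ε := by
        have := exp_pos β
        nlinarith
      have h5 : 2 * ε * (exp β * (2 / α)) = 4 * exp β / α * ε := by ring
      linarith
    · exact hQi
    · exact hEi.const_mul _
    · exact hQi.add (hEi.const_mul _)
    · exact hTi
  have hZ2 := abs_le.1 hZ1
  have hZhalf : 1 / 2 ≤ Z := by linarith
  refine ⟨hZhalf, by linarith, ?_⟩
  have hZpos : 0 < Z := by linarith
  have hsZ : 0 < √Z := sqrt_pos.2 hZpos
  have hsZ2 : √Z ^ 2 = Z := sq_sqrt hZpos.le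
  have hb : ∀ x, (√(f x) - √(g x / Z)) ^ 2 ≤
      2 * (2 * Q x + 2 * ε ^ 2 * E x + T x) + 2 * (1 - 1 / √Z) ^ 2 * g x := by
    intro x
    have h1 := (hpt x).1
    have h2 : √(g x / Z) = √(g x) / √Z := sqrt_div (hg0 x) Z
    have h3 : (√(g x) - √(g x / Z)) ^ 2 = (1 - 1 / √Z) ^ 2 * g x := by
      rw [h2]
      have := sq_sqrt (hg0 x)
      calc _ = (1 - 1 / √Z) ^ 2 * √(g x) ^ 2 := by ring
        _ = _ := by rw [this]
    have h4 : (√(f x) - √(g x / Z)) ^ 2 ≤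
        2 * (√(f x) - √(g x)) ^ 2 + 2 * (√(g x) - √(g x / Z)) ^ 2 := by
      generalize √(f x) = p
      generalize √(g x) = q
      generalize √(g x / Z) = r
      nlinarith [sq_nonneg ((p - q) - (q - r))]
    rw [h3] at h4
    have h5 : 2 * ((1 - 1 / √Z) ^ 2 * g x) = 2 * (1 - 1 / √Z) ^ 2 * g x := by ring
    linarith
  have hBi : Integrable (fun x => 2 * Q x + 2 * ε ^ 2 * E x + T x) :=
    ((hQi.const_mul _).add (hEi.const_mul _)).add hTi
  unfold hellingerSq
  have h1 : ∫ x, (√(f x) - √(g x / Z)) ^ 2 ≤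
      ∫ x, (2 * (2 * Q x + 2 * ε ^ 2 * E x + T x) + 2 * (1 - 1 / √Z) ^ 2 * g x) :=
    integral_mono_of_nonneg (Eventually.of_forall fun x => sq_nonneg _)
      ((hBi.const_mul _).add (hgi.const_mul _)) (Eventually.of_forall hb)
  refine h1.trans ?_
  rw [integral_add (hBi.const_mul _) (hgi.const_mul _), integral_const_mul, integral_const_mul]
  have h2 : 2 * (1 - 1 / √Z) ^ 2 * Z = 2 * (√Z - 1) ^ 2 := by
    conv_lhs => rw [← hsZ2]
    rw [sqrt_sq hsZ.le]
    field_simp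
  have h3 : (√Z - 1) ^ 2 ≤ (K * ε) ^ 2 := by
    have e : Z - 1 = (√Z - 1) * (√Z + 1) := by rw [← hsZ2, sqrt_sq hsZ.le]; ring
    have h4 : (Z - 1) ^ 2 ≤ (K * ε) ^ 2 := sq_le_sq' hZ2.1 hZ2.2
    rw [e, mul_pow] at h4
    have h5 : (1 : ℝ) ≤ (√Z + 1) ^ 2 := by nlinarith
    nlinarith [sq_nonneg (√Z - 1)]
  rw [← hZ, h2]
  have h6 : (2 * K + 2 * K ^ 2) * ε ^ 2 = 2 * (K * ε ^ 2) + 2 * (K * ε) ^ 2 := by ring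
  rw [h6]
  linarith
lemma ind_logconcave {φ : ℝ → ℝ} (hφ : ConcaveOn ℝ univ φ) (A B k : ℝ) (hk : 0 < k) :
    IsLogConcaveFn (fun x => (Icc A B).indicator (fun x => exp (φ x)) x / k) := by
  set g : ℝ → ℝ := (Icc A B).indicator (fun x => exp (φ x)) with hg
  have hg0 : ∀ x, 0 ≤ g x := fun x => Set.indicator_nonneg (fun _ _ => (exp_pos _).le) x
  intro x y t h0 h1
  dsimp only
  rcases h0.eq_or_lt with rfl | h0
  · simp
  rcases h1.eq_or_lt with rfl | h1
  · simp
  have hR : 0 ≤ g (t * x + (1 - t) * y) / k := div_nonneg (hg0 _) hk.le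
  by_cases hx : x ∈ Icc A B
  · by_cases hy : y ∈ Icc A B
    · have hz : t * x + (1 - t) * y ∈ Icc A B := by
        have := (convex_Icc A B) hx hy h0.le (sub_nonneg.2 h1.le) (by ring)
        simpa using this
      have ex : g x / k = exp (φ x - log k) := by
        rw [hg, Set.indicator_of_mem hx, exp_sub, exp_log hk]
      have ey : g y / k = exp (φ y - log k) := by
        rw [hg, Set.indicator_of_mem hy, exp_sub, exp_log hk]
      have ez : g (t * x + (1 - t) * y) / k = exp (φ (t * x + (1 - t) * y) - log k) := by
        rw [hg, Set.indicator_of_mem hz, exp_sub, exp_log hk]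
      rw [ex, ey, ez, ← exp_mul, ← exp_mul, ← exp_add]
      apply exp_le_exp.2
      have := hφ.2 (mem_univ x) (mem_univ y) h0.le (sub_nonneg.2 h1.le) (by ring)
      simp only [smul_eq_mul] at this
      linarith
    · have : g y = 0 := Set.indicator_of_notMem hy _
      rw [this, zero_div, zero_rpow (by linarith), mul_zero]
      exact hR
  · have : g x = 0 := Set.indicator_of_notMem hx _
    rw [this, zero_div, zero_rpow h0.ne', zero_mul]
    exact hR

lemma arsinh_exp_le {H : ℝ} (hH : 0 ≤ H) : arsinh (exp H) ≤ H + 1 := by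
  rw [← arsinh_sinh (H + 1), arsinh_le_arsinh, sinh_eq]
  have h1 : exp (H + 1) = exp H * exp 1 := exp_add _ _
  have h2 := exp_one_gt_d9
  have h3 : (1 : ℝ) ≤ exp H := one_le_exp hH
  have h4 : exp (-(H + 1)) ≤ 1 / 2 := by
    have : exp (-(H + 1)) ≤ exp (-1) := exp_le_exp.2 (by linarith)
    have h5 : exp (-1) ≤ 1 / 2 := by
      rw [exp_neg, inv_le_comm₀ (exp_pos _) (by norm_num)]; linarith
    linarith
  rw [h1]
  nlinarith

set_option maxHeartbeats 2000000 in
lemma core {α β h₀ L A B K : ℝ} {f : ℝ → ℝ} (hα : 0 < α) (hf : MemF α β f) (hh₀ : 0 ≤ h₀)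
    (hpk : ∃ x, exp (-h₀) ≤ f x)
    (hK : K = 8 * exp β + 4 * exp 3 / (α / 8) + 8 * exp β / α)
    (hL1 : 1 ≤ L) (hLh : 2 * (h₀ + 3) ≤ 4 / 5 * L) (hLβ : |β| < 4 / 5 * L)
    (hG : α ≤ exp (L * (4 / 5))) (hm : 2 ≤ exp (L * (1 / 5)))
    (hε1 : 4 * (L * exp (-(2 / 5 * L))) ≤ 1)
    (hKε : K * (4 * (L * exp (-(2 / 5 * L)))) ≤ 1 / 2)
    (hA : A ≤ -(8 / (5 * α) * L)) (hB : 8 / (5 * α) * L ≤ B) :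
    ∃ (N : ℕ) (z : Fin N → ℝ) (fbar : ℝ → ℝ),
      IsDensityFn fbar ∧ IsLogConcaveFn fbar ∧
      (N : ℝ) ≤ (12 + 4 / α) * exp (L * (1 / 5)) * L ∧
      StrictMono z ∧ (∀ i, z i ∈ Icc 0 (B - A)) ∧
      hellingerSq f fbar ≤ 16 * (2 * K + 2 * K ^ 2) * (L ^ 2 * exp (L * (-4 / 5))) ∧
      {x : ℝ | 0 < fbar x} = Icc A B ∧
      (∀ i j : Fin N, i ≠ j → 1 * exp (L * (-6 / 5)) * L ≤ |z i - z j|) ∧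
      (∀ x ∈ Icc A B, f x ≤ 2 * exp 1 * fbar x) ∧
      ∃ (γ₁ γ₂ γ₃ : ℝ) (p : Fin N → ℝ),
        γ₁ ∈ Icc 0 (2 * (B - A) * exp (L * (4 / 5))) ∧
        |γ₂| ≤ exp (L * (4 / 5)) ∧
        (∀ i, 0 ≤ p i) ∧ (∑ i, p i) = 1 ∧
        ∀ x : ℝ,
          fbar x = Set.indicator (Icc A B)
            (fun y => Real.exp
              (γ₁ * (∑ i, min (z i) (y - A) / z i * p i) - γ₂ * (y - A) + γ₃)) x := by
  obtain ⟨u, huc, hlip, hfu, henv, τ₁, τ₂, hdiff⟩ := regularize hα hf hG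
  obtain ⟨xs, hxs⟩ := hpk
  have hdens := hf.1
  have hLpos : 0 < L := by linarith
  set H := 4 / 5 * L with hH
  have hβ := abs_lt.1 hLβ
  have hH0 : 0 < H := by linarith
  have hGH : exp (L * (4 / 5)) = exp H := by rw [hH]; ring_nf
  have hcut : 8 / (5 * α) * L = 2 * H / α := by rw [hH]; field_simp; ring
  rw [hcut] at hA hB
  have hR : (β + H) / α ≤ 2 * H / α := div_le_div_of_nonneg_right (by linarith) hα.le
  have hR0 : 0 < (β + H) / α := div_pos (by linarith) hα
  have hH2 : 0 < 2 * H / α := by positivity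
  have hux : -h₀ ≤ u xs := exp_le_exp.1 (hxs.trans (hfu xs))
  have hxsabs : |xs| ≤ 2 * H / α := by
    rw [le_div_iff₀ hα]
    have := henv xs
    linarith
  have hAxs : A ≤ xs := by linarith [(abs_le.1 hxsabs).1]
  have huA : u A < -H := by
    have h1 := henv A
    have h2 : 2 * H / α ≤ |A| := by rw [abs_of_neg (by linarith)]; linarith
    rw [div_le_iff₀ hα] at h2
    linarith
  set δ := exp (L * (-6 / 5)) * L with hδ
  have hδ0 : 0 < δ := by positivity
  have hGδ : exp (L * (4 / 5)) * δ = L * exp (-(2 / 5 * L)) := by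
    rw [hδ, ← mul_assoc, ← exp_add, mul_comm]
    congr 2; ring
  set ε := 4 * (L * exp (-(2 / 5 * L))) with hε
  have hε0 : 0 < ε := by positivity
  have hm2 : 4 / exp (L * (1 / 5)) ^ 2 = 4 * exp (-(2 / 5 * L)) := by
    rw [div_eq_mul_inv, ← exp_nat_mul, ← exp_neg]
    congr 2; push_cast; ring
  have hm2ε : 4 / exp (L * (1 / 5)) ^ 2 ≤ ε := by
    rw [hm2, hε]
    have := exp_pos (-(2 / 5 * L))
    nlinarith
  obtain ⟨N, Z, D, a, b, L₀, s₁, s₂, hN, hZm, hZs, hZr, hD, hDs, hs1, hs1G, hs2, hs2G, hlow, hup⟩ :=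
    approx (m := exp (L * (1 / 5))) (H := H) huc hα hlip henv hδ0 (by rw [hGδ]; linarith) hm hux hAxs huA
      (by linarith) (by linarith)
  rw [hGδ] at hlow
  have hslope : ∀ s : ℝ, H - h₀ - 2 ≤ s * (2 * ((β + H) / α)) → α / 8 ≤ s := by
    intro s hs
    have h1 : 0 < s := by
      by_contra h
      have : s * (2 * ((β + H) / α)) ≤ 0 := mul_nonpos_of_nonpos_of_nonneg (by linarith) (by linarith)
      linarith
    have h2 : s * (2 * ((β + H) / α)) ≤ s * (2 * (2 * H / α)) :=
      mul_le_mul_of_nonneg_left (by linarith) h1.le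
    have h3 : H / 2 ≤ s * (2 * (2 * H / α)) := by linarith
    have h4 : s * (2 * (2 * H / α)) = (s * 4 / α) * H := by ring
    rw [h4] at h3
    have h5 : 1 / 2 ≤ s * 4 / α := by
      by_contra h
      push Not at h
      nlinarith
    rw [le_div_iff₀ hα] at h5
    linarith
  have hs1' := hslope _ hs1
  have hs2' := hslope _ hs2
  set φ : ℝ → ℝ := fun x => L₀ + s₁ * (x - A) - ∑ i, D i * max (x - A - Z i) 0 with hφdef
  have hφc : Continuous φ := by
    simp only [hφdef]
    fun_prop
  have hAB : A ≤ B := by linarith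
  have hη : exp (-H) ≤ ε ^ 2 := by
    have e1 : exp (-H) = exp (-(2 / 5 * L)) ^ 2 := by
      rw [← exp_nat_mul, hH]; congr 1; push_cast; ring
    rw [e1]
    apply pow_le_pow_left₀ (exp_pos _).le
    rw [hε]
    have := exp_pos (-(2 / 5 * L))
    nlinarith
  have hHell := hell (α := α) (β := β) (f := f) (u := u) (φ := φ) (H := H) (A := A) (B := B) (a := a) (b := b)
    (c := α / 8) (ε := ε) (τ₁ := τ₁) (τ₂ := τ₂) hα hdens (by positivity) hε0 hε1 hη hfu henv
    (by rw [← hGH]; exact hdiff)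
    (fun x => by
      have h1 := hlow x
      have h2 : 0 < L * exp (-(2 / 5 * L)) := by positivity
      have h3 : 2 * (L * exp (-(2 / 5 * L))) ≤ ε := by rw [hε]; linarith
      simp only [hφdef]; linarith)
    (fun x => by
      rcases hup x with h | h | h
      · left; simp only [hφdef]; linarith
      · right; left
        have := mul_le_mul_of_nonneg_right hs1' (abs_nonneg (x - a))
        simp only [hφdef]; linarith
      · right; right
        have := mul_le_mul_of_nonneg_right hs2' (abs_nonneg (x - b))
        simp only [hφdef]; linarith)
    hφc
    (fun x hx => by
      have : 2 * H / α ≤ |x| := by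
        rw [mem_Icc, not_and_or, not_le, not_le] at hx
        rcases hx with hx | hx
        · have := neg_abs_le x; linarith
        · have := le_abs_self x; linarith
      rw [div_le_iff₀ hα] at this
      linarith)
    (by rw [← hK]; exact hKε)
  rw [← hK] at hHell
  dsimp only at hHell
  set g : ℝ → ℝ := (Icc A B).indicator (fun x => exp (φ x)) with hg
  obtain ⟨hZ1, hZ2, hhell⟩ := hHell
  set k := ∫ x, g x with hk
  have hk0 : 0 < k := by linarith
  have hφconc : ConcaveOn ℝ univ φ := by
    refine ⟨convex_univ, fun x _ y _ s t hs ht hst => ?_⟩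
    simp only [hφdef, smul_eq_mul]
    have h1 : ∑ i, D i * max (s * x + t * y - A - Z i) 0 ≤
        s * ∑ i, D i * max (x - A - Z i) 0 + t * ∑ i, D i * max (y - A - Z i) 0 := by
      rw [Finset.mul_sum, Finset.mul_sum, ← Finset.sum_add_distrib]
      apply Finset.sum_le_sum
      intro i _
      have h2 : max (s * x + t * y - A - Z i) 0 ≤ s * max (x - A - Z i) 0 + t * max (y - A - Z i) 0 := by
        have m1 := mul_le_mul_of_nonneg_left (le_max_left (x - A - Z i) 0) hs
        have m2 := mul_le_mul_of_nonneg_left (le_max_left (y - A - Z i) 0) ht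
        apply max_le
        · have : s * x + t * y - A - Z i = s * (x - A - Z i) + t * (y - A - Z i) := by
            have : t = 1 - s := by linarith
            rw [this]; ring
          linarith
        · exact add_nonneg (mul_nonneg hs (le_max_right _ _)) (mul_nonneg ht (le_max_right _ _))
      have := mul_le_mul_of_nonneg_left h2 (hD i).le
      linarith
    have h3 : L₀ + s₁ * (s * x + t * y - A) = s * (L₀ + s₁ * (x - A)) + t * (L₀ + s₁ * (y - A)) := by
      have : t = 1 - s := by linarith
      rw [this]; ring
    linarith
  have hZB : ∀ i, Z i ≤ B - A := fun i => by linarith [(hZr i).2]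
  have hsum0 : 0 < ∑ i, D i := by rw [hDs]; linarith
  have hne : (Finset.univ : Finset (Fin N)).Nonempty := by
    by_contra h
    rw [Finset.not_nonempty_iff_eq_empty] at h
    rw [h] at hsum0
    simp at hsum0
  have hγ : 0 < ∑ i, D i * Z i := Finset.sum_pos (fun i _ => mul_pos (hD i) (hZr i).1) hne
  refine ⟨N, Z, fun x => g x / k, ⟨?_, ?_, ?_⟩, ?_, ?_, hZm, fun i => ⟨(hZr i).1.le, hZB i⟩, ?_, ?_, ?_, ?_, ?_⟩
  · exact ((hφc.rexp.measurable).indicator measurableSet_Icc).div_const k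
  · intro x
    exact div_nonneg (Set.indicator_nonneg (fun _ _ => (exp_pos _).le) x) hk0.le
  · rw [integral_div, ← hk, div_self hk0.ne']
  · exact ind_logconcave hφconc A B k hk0
  · refine hN.trans ?_
    have h1 := arsinh_exp_le hH0.le
    rw [← hGH] at h1
    set m := exp (L * (1 / 5)) with hmdef
    have h2 : 4 * arsinh (exp (L * (4 / 5))) + (2 * ((β + H) / α) + 2 * β + 2 * H) ≤
        (11 + 4 / α) * L := by
      have h3 : 2 * ((β + H) / α) ≤ 4 / α * L := by
        have : 2 * (2 * H / α) = 16 / 5 / α * L := by rw [hH]; ring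
        have h4 : 16 / 5 / α * L ≤ 4 / α * L :=
          mul_le_mul_of_nonneg_right (div_le_div_of_nonneg_right (by norm_num) hα.le) hLpos.le
        linarith
      linarith
    have h3 := mul_le_mul_of_nonneg_left h2 (exp_pos (L * (1 / 5))).le
    have h4 : 1 ≤ m * L := by nlinarith
    have h5 : (12 + 4 / α) * m * L = m * ((11 + 4 / α) * L) + m * L := by ring
    linarith
  · refine hhell.trans (le_of_eq ?_)
    have e1 : exp (L * (-4 / 5)) = exp (-(2 / 5 * L)) ^ 2 := by
      rw [← exp_nat_mul]; congr 1; push_cast; ring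
    rw [e1, hε]; ring
  · ext x
    change 0 < g x / k ↔ x ∈ Icc A B
    constructor
    · intro h
      by_contra hx
      have : g x = 0 := Set.indicator_of_notMem hx _
      rw [this] at h
      simp at h
    · intro hx
      have : g x = exp (φ x) := Set.indicator_of_mem hx _
      rw [this]; positivity
  · intro i j hij
    rw [one_mul]; exact hZs i j hij
  · intro x hx
    have hgx : g x = exp (φ x) := Set.indicator_of_mem hx _
    have h1 : f x ≤ exp 1 * g x := by
      rw [hgx, ← exp_add]
      refine (hfu x).trans (exp_le_exp.2 ?_)
      have h1 := hlow x
      have h2 : 0 < L * exp (-(2 / 5 * L)) := by positivity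
      simp only [hφdef]; linarith
    have h2 : g x = k * (g x / k) := by field_simp
    have h3 : 0 ≤ g x / k := by rw [hgx]; positivity
    calc f x ≤ exp 1 * g x := h1
      _ = exp 1 * (k * (g x / k)) := by rw [← h2]
      _ ≤ exp 1 * (2 * (g x / k)) := by gcongr
      _ = _ := by ring
  · refine ⟨∑ i, D i * Z i, -s₂, L₀ - log k, fun i => D i * Z i / ∑ i, D i * Z i, ⟨hγ.le, ?_⟩, ?_, ?_, ?_, ?_⟩
    · calc ∑ i, D i * Z i ≤ ∑ i, D i * (B - A) :=
          Finset.sum_le_sum fun i _ => mul_le_mul_of_nonneg_left (hZB i) (hD i).le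
        _ = (s₁ - s₂) * (B - A) := by rw [← Finset.sum_mul, hDs]
        _ ≤ (2 * exp (L * (4 / 5))) * (B - A) :=
          mul_le_mul_of_nonneg_right (by linarith) (by linarith)
        _ = _ := by ring
    · rw [abs_of_pos (by linarith)]; linarith
    · intro i
      exact div_nonneg (mul_nonneg (hD i).le (hZr i).1.le) hγ.le
    · rw [← Finset.sum_div, div_self hγ.ne']
    · intro x
      by_cases hx : x ∈ Icc A B
      · have hgx : g x = exp (φ x) := Set.indicator_of_mem hx _
        rw [Set.indicator_of_mem hx]
        dsimp only
        rw [hgx]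
        have e1 : exp (φ x) / k = exp (φ x - log k) := by
          rw [exp_sub (φ x) (log k), exp_log hk0]
        rw [e1]
        congr 1
        have e2 : (∑ i, D i * Z i) * (∑ i, min (Z i) (x - A) / Z i * (D i * Z i / ∑ i, D i * Z i)) =
            ∑ i, D i * min (Z i) (x - A) := by
          rw [Finset.mul_sum]
          apply Finset.sum_congr rfl
          intro i _
          have := (hZr i).1.ne'
          have := hγ.ne'
          field_simp
        rw [e2]
        have e3 : ∑ i, D i * max (x - A - Z i) 0 = (s₁ - s₂) * (x - A) - ∑ i, D i * min (Z i) (x - A) := by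
          rw [← hDs, Finset.sum_mul, ← Finset.sum_sub_distrib]
          apply Finset.sum_congr rfl
          intro i _
          rcases le_total (Z i) (x - A) with h | h
          · rw [min_eq_left h, max_eq_left (by linarith)]; ring
          · rw [min_eq_right h, max_eq_right (by linarith)]; ring
        simp only [hφdef]
        rw [e3]; ring
      · have hgx : g x = 0 := Set.indicator_of_notMem hx _
        rw [Set.indicator_of_notMem hx]
        dsimp only
        rw [hgx, zero_div]

/-- Proposition: piecewise log-linear approximation. Let
`f₀ ∈ F_{α,β}` and let `[A n, B n]` be compact intervals containing
`[−(8/(5α)) log n, (8/(5α)) log n]` with `B n − A n = o(n^{4/5})`. There is a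
universal constant `c > 0` and constants `C = C(α,β) > 0`, `n₀ = n₀(α,β)` such
that for all `n ≥ n₀` there is a log-concave density `f̄ₙ`, piecewise log-linear
with `N̄ ≤ C n^{1/5} log n` knots `z₁ < ⋯ < z_{N̄} ∈ [0, B n − A n]` (explicit
mixture representation (v)), satisfying properties (i)–(v). -/
theorem piecewise_loglinear_approximation :
    ∃ c : ℝ, 0 < c ∧
      ∀ α : ℝ, 0 < α → ∀ β : ℝ,
        ∃ C : ℝ, 0 < C ∧ ∃ n₀ : ℕ,
          ∀ f₀ : ℝ → ℝ, MemF α β f₀ →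
            ∀ A B : ℕ → ℝ,
              (∀ n : ℕ, Icc (-((8 / (5 * α)) * Real.log n)) ((8 / (5 * α)) * Real.log n)
                  ⊆ Icc (A n) (B n)) →
              (fun n : ℕ => B n - A n) =o[atTop] (fun n : ℕ => (n : ℝ) ^ ((4:ℝ)/5)) →
              ∀ n : ℕ, n₀ ≤ n →
                ∃ (N : ℕ) (z : Fin N → ℝ) (fbar : ℝ → ℝ),
                  -- f̄ₙ is a log-concave density
                  IsDensityFn fbar ∧ IsLogConcaveFn fbar ∧
                  -- at most C n^{1/5} log n knots, lying in [0, B n − A n]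
                  (N : ℝ) ≤ C * (n : ℝ) ^ ((1:ℝ)/5) * Real.log n ∧
                  StrictMono z ∧ (∀ i, z i ∈ Icc 0 (B n - A n)) ∧
                  -- (i) Hellinger approximation
                  hellingerSq f₀ fbar ≤
                    C * ((Real.log n) ^ 2 * (n : ℝ) ^ (-(4:ℝ)/5) +
                      (B n - A n) ^ 2 * (n : ℝ) ^ (-(8:ℝ)/5)) ∧
                  -- (ii) support is exactly [A n, B n]
                  {x : ℝ | 0 < fbar x} = Icc (A n) (B n) ∧
                  -- (iii) the knots are c n^{-6/5} log n separated
                  (∀ i j : Fin N, i ≠ j →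
                    c * (n : ℝ) ^ (-(6:ℝ)/5) * Real.log n ≤ |z i - z j|) ∧
                  -- (iv) uniform domination of f₀ by C f̄ₙ on [A n, B n]
                  (∀ x ∈ Icc (A n) (B n), f₀ x ≤ C * fbar x) ∧
                  -- (v) explicit piecewise log-linear mixture representation
                  ∃ (γ₁ γ₂ γ₃ : ℝ) (p : Fin N → ℝ),
                    γ₁ ∈ Icc 0 (2 * (B n - A n) * (n : ℝ) ^ ((4:ℝ)/5)) ∧
                    |γ₂| ≤ (n : ℝ) ^ ((4:ℝ)/5) ∧
                    (∀ i, 0 ≤ p i) ∧ (∑ i, p i) = 1 ∧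
                    ∀ x : ℝ,
                      fbar x = Set.indicator (Icc (A n) (B n))
                        (fun y => Real.exp
                          (γ₁ * (∑ i, min (z i) (y - A n) / z i * p i) -
                            γ₂ * (y - A n) + γ₃)) x := by
  refine ⟨1, one_pos, fun α hα β => ?_⟩
  obtain ⟨h₀, hh₀, hpk⟩ := peak α β hα
  set K := 8 * exp β + 4 * exp 3 / (α / 8) + 8 * exp β / α with hK
  have hK0 : 0 < K := by positivity
  have hlog : Tendsto (fun n : ℕ => Real.log n) atTop atTop :=
    tendsto_log_atTop.comp tendsto_natCast_atTop_atTop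
  have hdecay : Tendsto (fun L : ℝ => L * exp (-(2 / 5 * L))) atTop (nhds 0) := by
    have h1 : Tendsto (fun L : ℝ => 2 / 5 * L) atTop atTop :=
      tendsto_id.const_mul_atTop (by norm_num)
    have h2 := ((tendsto_pow_mul_exp_neg_atTop_nhds_zero 1).comp h1).const_mul (5 / 2)
    rw [mul_zero] at h2
    refine h2.congr fun L => ?_
    simp only [Function.comp, pow_one]
    ring
  have hexp : ∀ r : ℝ, 0 < r → Tendsto (fun L : ℝ => exp (L * r)) atTop atTop := fun r hr =>
    tendsto_exp_atTop.comp (tendsto_id.atTop_mul_const hr)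
  have hev : ∀ᶠ L : ℝ in atTop, 1 ≤ L ∧ 2 * (h₀ + 3) ≤ 4 / 5 * L ∧ |β| < 4 / 5 * L ∧
      α ≤ exp (L * (4 / 5)) ∧ 2 ≤ exp (L * (1 / 5)) ∧
      4 * (L * exp (-(2 / 5 * L))) ≤ 1 ∧ K * (4 * (L * exp (-(2 / 5 * L)))) ≤ 1 / 2 := by
    have h1 : ∀ᶠ L : ℝ in atTop, L * exp (-(2 / 5 * L)) < min (1 / 4) (1 / (8 * K)) :=
      hdecay.eventually (gt_mem_nhds (by positivity))
    filter_upwards [eventually_ge_atTop 1, eventually_ge_atTop (5 / 4 * (2 * (h₀ + 3))),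
      eventually_gt_atTop (5 / 4 * |β|), (hexp (4 / 5) (by norm_num)).eventually_ge_atTop α,
      (hexp (1 / 5) (by norm_num)).eventually_ge_atTop 2, h1] with L a1 a2 a3 a4 a5 a6
    have b1 := lt_min_iff.1 a6
    refine ⟨a1, by linarith, by linarith, a4, a5, by linarith [b1.1], ?_⟩
    have b2 := b1.2.le
    rw [le_div_iff₀ (by positivity)] at b2
    linarith
  obtain ⟨n₀, hn₀⟩ := eventually_atTop.1 (hlog.eventually hev)
  set C := (12 + 4 / α) + 16 * (2 * K + 2 * K ^ 2) + 2 * exp 1 with hC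
  have c1 : 0 < 12 + 4 / α := by positivity
  have c2 : 0 < 16 * (2 * K + 2 * K ^ 2) := by positivity
  have c3 : 0 < 2 * exp 1 := by positivity
  refine ⟨C, by positivity, max n₀ 1, ?_⟩
  intro f₀ hf A B hsub _ n hn
  obtain ⟨d1, d2, d3, d4, d5, d6, d7⟩ := hn₀ n ((le_max_left _ _).trans hn)
  have hn0 : (0 : ℝ) < n := by
    have : 1 ≤ n := (le_max_right _ _).trans hn
    exact_mod_cast this
  have hlen : 0 ≤ (8 / (5 * α)) * Real.log n := by positivity
  have hA : A n ≤ -((8 / (5 * α)) * Real.log n) :=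
    (hsub n (left_mem_Icc.2 (by linarith))).1
  have hB : (8 / (5 * α)) * Real.log n ≤ B n :=
    (hsub n (right_mem_Icc.2 (by linarith))).2
  obtain ⟨N, z, fbar, e1, e2, e3, e4, e5, e6, e7, e8, e9, e10⟩ :=
    core hα hf hh₀ (hpk f₀ hf) hK d1 d2 d3 d4 d5 d6 d7 hA hB
  have hr : ∀ r : ℝ, (n : ℝ) ^ r = exp (Real.log n * r) := fun r => rpow_def_of_pos hn0 r
  simp only [hr]
  refine ⟨N, z, fbar, e1, e2, ?_, e4, e5, ?_, e7, e8, ?_, e10⟩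
  · refine e3.trans ?_
    have : 0 ≤ exp (Real.log n * (1 / 5)) * Real.log n := by positivity
    rw [mul_assoc, mul_assoc]
    exact mul_le_mul_of_nonneg_right (by linarith) this
  · refine e6.trans ?_
    have t1 : 0 ≤ Real.log n ^ 2 * exp (Real.log n * (-4 / 5)) := by positivity
    have t2 : 0 ≤ (B n - A n) ^ 2 * exp (Real.log n * (-8 / 5)) := by positivity
    exact mul_le_mul (by linarith) (by linarith) t1 (by linarith)
  · intro x hx
    exact (e9 x hx).trans (mul_le_mul_of_nonneg_right (by linarith) (e1.2.1 x))
end
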